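/- Let V ⊆ V' be an immediate extension of valuation rings containing the field Q of rational numbers. Then V' is a filtered direct colimit of smooth V-algebras; equivalently, for every finitely presented V-algebra A and every V-algebra homomorphism u : A → V', there exist a smooth V-algebra B, a V-algebra homomorphism A → B and a V-algebra homomorphism B → V' whose composite is u. -/

import Mathlib

/-- An extension `V ⊆ V'` of valuation rings (given by an injective algebra structure)
is *immediate* if it is local (the maximal ideal of `V` is the contraction of that of
`V'`), the induced map of residue fields is an isomorphism (i.e. surjective), and the
induced map of value groups is an isomorphism (every nonzero element of `V'` has the
same value as a quotient of elements of `V`, i.e. `x * b` is associated to some `a`). -/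
def IsImmediateExtension (V V' : Type*) [CommRing V] [IsLocalRing V]
    [CommRing V'] [IsLocalRing V'] [Algebra V V'] : Prop :=
  Function.Injective (algebraMap V V') ∧
  (∀ a : V, algebraMap V V' a ∈ IsLocalRing.maximalIdeal V' ↔
    a ∈ IsLocalRing.maximalIdeal V) ∧
  (∀ x : V', ∃ a : V, x - algebraMap V V' a ∈ IsLocalRing.maximalIdeal V') ∧
  (∀ x : V', x ≠ 0 → ∃ a b : V, a ≠ 0 ∧ b ≠ 0 ∧
    Associated (algebraMap V V' a) (x * algebraMap V V' b))

section

open Polynomial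

universe u

theorem Algebra.Smooth.quotient_span_singleton_of_isUnit_derivation {R A : Type*} [CommRing R]
    [CommRing A] [Algebra R A] [Algebra.Smooth R A] (D : Derivation R A A) (h : A)
    (hD : IsUnit (D h)) : Algebra.Smooth R (A ⧸ Ideal.span {h}) := by
  obtain ⟨t, ht⟩ := hD.exists_right_inv
  refine ⟨.of_comp_surjective fun B _ _ I hI f ↦ ?_,
    Algebra.FinitePresentation.quotient (Submodule.fg_span_singleton h)⟩
  obtain ⟨F, hF⟩ := Algebra.FormallySmooth.comp_surjective R A I hI
    (f.comp (Ideal.Quotient.mkₐ R (Ideal.span {h})))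
  have hFx : ∀ x, Ideal.Quotient.mk I (F x) = f (Ideal.Quotient.mk _ x) :=
    fun x ↦ DFunLike.congr_fun hF x
  have hν : F h ∈ I := by
    rw [← Ideal.Quotient.eq_zero_iff_mem, hFx,
      Ideal.Quotient.eq_zero_iff_mem.mpr (Ideal.mem_span_singleton_self h), map_zero]
  have hν2 : F h * F h = 0 := by
    have := Ideal.mul_mem_mul hν hν
    rwa [← pow_two, hI] at this
  let G : A →ₐ[R] B := AlgHom.ofLinearMap
    (F.toLinearMap - (LinearMap.mulLeft R (F t * F h)) ∘ₗ F.toLinearMap ∘ₗ D.toLinearMap)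
    (by simp)
    (fun x y ↦ by
      simp only [LinearMap.sub_apply, AlgHom.toLinearMap_apply, map_mul, LinearMap.comp_apply,
        Derivation.coeFn_coe, Derivation.leibniz, smul_eq_mul, map_add, LinearMap.mulLeft_apply]
      linear_combination (- F t ^ 2 * F (D x) * F (D y)) * hν2)
  have hG : ∀ x, G x = F x - F t * F h * F (D x) := fun x ↦ rfl
  have hGh : G h = 0 := by
    rw [hG, show F t * F h * F (D h) = F h * F (D h * t) by rw [map_mul]; ring, ht]
    simp
  refine ⟨Ideal.Quotient.liftₐ _ G fun a ha ↦ ?_, ?_⟩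
  · obtain ⟨b, rfl⟩ := Ideal.mem_span_singleton'.mp ha
    rw [map_mul, hGh, mul_zero]
  · refine Ideal.Quotient.algHom_ext _ (AlgHom.ext fun x ↦ ?_)
    change Ideal.Quotient.mk I (G x) = f (Ideal.Quotient.mk _ x)
    rw [hG, map_sub, hFx, sub_eq_self, Ideal.Quotient.eq_zero_iff_mem]
    exact I.mul_mem_right _ (I.mul_mem_left _ hν)

theorem Algebra.Smooth.polynomial_quotient_of_isUnit_derivation {R A : Type*} [CommRing R]
    [CommRing A] [Algebra R A] [Algebra.Smooth R A] (D : Derivation R A A) (a e : A)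
    (hD : IsUnit (D a)) (he : D e = 0) :
    Algebra.Smooth R (A[X] ⧸ Ideal.span {C a - C e * X}) := by
  have : Algebra.Smooth A A[X] := {}
  have : Algebra.Smooth R A[X] := .comp R A A[X]
  let D' : Derivation R A[X] A[X] :=
    (PolynomialModule.equivPolynomialSelf (R := A)).toLinearMap.compDer D.mapCoeffs
  have key : ∀ p i, (D' p).coeff i = D (p.coeff i) := fun p i ↦ rfl
  refine Algebra.Smooth.quotient_span_singleton_of_isUnit_derivation D' _ ?_
  have : D' (C a - C e * X) = C (D a) := by
    ext i
    rw [key]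
    rcases i with _ | _ | i <;> simp [coeff_C, coeff_X, he]
  rw [this]
  exact hD.map C

theorem Algebra.Smooth.eq_zero_of_smul_eq_zero {R A : Type*} [CommRing R] [IsDomain R]
    [CommRing A] [Algebra R A] [Algebra.Smooth R A] {e : R} (he : e ≠ 0) {a : A}
    (h : e • a = 0) : a = 0 := by
  have : Module.Flat R A := Algebra.Smooth.flat R A
  exact (smul_eq_zero_iff_right he).mp h

theorem Algebra.Smooth.range_of_smul_eq_zero {R A Q L : Type*} [CommRing R] [IsDomain R]
    [CommRing A] [CommRing Q] [CommRing L] [Algebra R A] [Algebra R Q] [Algebra R L]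
    [Algebra.Smooth R Q] (π : A →ₐ[R] Q) (hπ : Function.Surjective π) (F : A →ₐ[R] L)
    (hF : ∀ p, π p = 0 → F p = 0) (hF' : ∀ p, F p = 0 → ∃ e : R, e ≠ 0 ∧ π (e • p) = 0) :
    Algebra.Smooth R F.range := by
  have hker : RingHom.ker π = RingHom.ker F := by
    ext p
    refine ⟨hF p, fun hp ↦ ?_⟩
    obtain ⟨e, he, h⟩ := hF' p hp
    rw [map_smul] at h
    exact Algebra.Smooth.eq_zero_of_smul_eq_zero he h
  have e₁ := Ideal.quotientKerAlgEquivOfSurjective hπ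
  have e₂ := Ideal.quotientKerAlgEquivOfSurjective F.rangeRestrict_surjective
  have h₂ : RingHom.ker F.rangeRestrict = RingHom.ker F := by
    ext p
    simp [RingHom.mem_ker, Subtype.ext_iff]
  exact .of_equiv (e₁.symm.trans ((Ideal.quotientEquivAlgOfEq R (hker.trans h₂.symm)).trans e₂))

theorem Algebra.Smooth.range_of_quotient_span_singleton {R A L : Type*} [CommRing R] [IsDomain R]
    [CommRing A] [CommRing L] [Algebra R A] [Algebra R L] (h : A)
    (hs : Algebra.Smooth R (A ⧸ Ideal.span {h})) (F : A →ₐ[R] L) (hF : F h = 0)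
    (hF' : ∀ p, F p = 0 → ∃ e : R, e ≠ 0 ∧ h ∣ e • p) : Algebra.Smooth R F.range := by
  have hzero : ∀ p, Ideal.Quotient.mkₐ R (Ideal.span {h}) p = 0 ↔ h ∣ p := fun p ↦
    Ideal.Quotient.eq_zero_iff_mem.trans Ideal.mem_span_singleton
  refine Algebra.Smooth.range_of_smul_eq_zero (Ideal.Quotient.mkₐ R (Ideal.span {h}))
    (Ideal.Quotient.mkₐ_surjective _ _) F (fun p hp ↦ ?_) fun p hp ↦ ?_
  · obtain ⟨q, rfl⟩ := (hzero p).mp hp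
    rw [map_mul, hF, zero_mul]
  · obtain ⟨e, he, hd⟩ := hF' p hp
    exact ⟨e, he, (hzero _).mpr hd⟩

theorem Subalgebra.smooth_adjoin_insert_of_isUnit_derivation {R L : Type*} [CommRing R] [IsDomain R]
    [CommRing L] [Algebra R L] (B : Subalgebra R L) [Algebra.Smooth R B] (D : Derivation R B B)
    (a : B) (ha : IsUnit (D a)) (e : R) (he : e ≠ 0) (x : L)
    (hx : e • x = a) : Algebra.Smooth R (Algebra.adjoin R (insert x (B : Set L))) := by
  have hsm := Algebra.Smooth.polynomial_quotient_of_isUnit_derivation D a (algebraMap R B e) ha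
    (by simp)
  set h : B[X] := C a - C (algebraMap R B e) * X with hh
  let F : B[X] →ₐ[R] L := (aeval (R := B) x).restrictScalars R
  have hFC : ∀ b : B, F (C b) = b := fun b ↦ aeval_C (R := B) x b
  have hFX : F X = x := aeval_X (R := B) x
  have hFh : F h = 0 := by
    rw [hh, map_sub, map_mul, hFC, hFC, hFX, ← hx, sub_eq_zero, Algebra.smul_def]
    rfl
  have hsmul : ∀ p : B[X], ∀ r : R, r • p = C (algebraMap R B r) * p := fun p r ↦ by
    ext i; simp [Algebra.smul_def]
  have hclear : ∀ p : B[X], ∃ (n : ℕ) (b : B), h ∣ e ^ n • p - C b := by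
    intro p
    induction p using Polynomial.induction_on' with
    | add p q hp hq =>
      obtain ⟨n, b, r, hr⟩ := hp
      obtain ⟨m, c, s, hs⟩ := hq
      refine ⟨m + n, e ^ m • b + e ^ n • c, e ^ m • r + e ^ n • s, ?_⟩
      simp only [hsmul, Algebra.smul_def, C_add, map_mul, map_pow,
        pow_add] at hr hs ⊢
      linear_combination C (algebraMap R B e) ^ m * hr + C (algebraMap R B e) ^ n * hs
    | monomial n b =>
      refine ⟨n, b * a ^ n, ?_⟩
      have : h ∣ (C (algebraMap R B e) * X) ^ n - C a ^ n := by
        refine dvd_trans ?_ (sub_dvd_pow_sub_pow _ _ n)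
        rw [hh, ← dvd_neg, neg_sub]
      refine (this.mul_left (C b)).trans (dvd_of_eq ?_)
      simp only [hsmul, C_mul, map_pow, ← C_mul_X_pow_eq_monomial]
      ring
  have hrange : F.range = Algebra.adjoin R (insert x (B : Set L)) := by
    apply le_antisymm
    · rintro _ ⟨p, rfl⟩
      change F p ∈ _
      induction p using Polynomial.induction_on' with
      | add p q hp hq => rw [map_add]; exact add_mem hp hq
      | monomial n b =>
        rw [← C_mul_X_pow_eq_monomial, map_mul, map_pow, hFC, hFX]
        exact mul_mem (Algebra.subset_adjoin (Set.mem_insert_of_mem _ b.2))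
          (pow_mem (Algebra.subset_adjoin (Set.mem_insert _ _)) n)
    · exact Algebra.adjoin_le (Set.insert_subset ⟨X, hFX⟩ fun b hb ↦ ⟨C ⟨b, hb⟩, hFC ⟨b, hb⟩⟩)
  rw [← hrange]
  refine Algebra.Smooth.range_of_quotient_span_singleton h hsm F hFh fun p hp ↦ ?_
  obtain ⟨n, b, q, hb⟩ := hclear p
  refine ⟨e ^ n, pow_ne_zero n he, q, ?_⟩
  have := congrArg F hb
  rw [map_sub, map_smul, hp, smul_zero, map_mul, hFh, zero_mul, hFC, zero_sub,
    neg_eq_zero] at this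
  rw [← hb, show b = 0 from Subtype.ext this, C_0, sub_zero]

theorem Subalgebra.exists_smooth_localizationAway {R L : Type*} [CommRing R]
    [CommRing L] [Algebra R L] (B : Subalgebra R L) [Algebra.Smooth R B] (p : L) (hp : p ∈ B)
    (hu : IsUnit p) : ∃ B' : Subalgebra R L, B ≤ B' ∧ Algebra.Smooth R B' ∧
      (∃ t ∈ B', p * t = 1) ∧ ∀ x ∈ B', ∃ n : ℕ, p ^ n * x ∈ B := by
  let p' : B := ⟨p, hp⟩
  have : Algebra.Smooth B (Localization.Away p') := .of_isLocalization_Away p'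
  have : Algebra.Smooth R (Localization.Away p') := .comp R B _
  let f : Localization.Away p' →ₐ[R] L :=
    IsLocalization.liftAlgHom (M := Submonoid.powers p') (f := B.val) (by
      rintro ⟨_, n, rfl⟩
      exact hu.pow n)
  have hf : ∀ b : B, f (algebraMap B _ b) = b := fun b ↦ IsLocalization.lift_eq _ b
  have hrep : ∀ r : Localization.Away p', ∃ (n : ℕ) (b : B),
      algebraMap B _ p' ^ n * r = algebraMap B _ b := by
    intro r
    obtain ⟨n, a, ha⟩ := IsLocalization.Away.surj p' r
    exact ⟨n, a, by rw [mul_comm, ha]⟩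
  have hrep' : ∀ r : Localization.Away p', ∃ (n : ℕ) (b : B),
      algebraMap B _ p' ^ n * r = algebraMap B _ b ∧ p ^ n * f r = b := by
    intro r
    obtain ⟨n, b, h⟩ := hrep r
    refine ⟨n, b, h, ?_⟩
    have := congrArg f h
    rwa [map_mul, map_pow, hf, hf] at this
  have hinj : Function.Injective f := by
    rw [injective_iff_map_eq_zero]
    intro r hr
    obtain ⟨n, b, h, h'⟩ := hrep' r
    rw [hr, mul_zero] at h'
    rw [show b = 0 from Subtype.ext h'.symm, map_zero] at h
    exact (((IsLocalization.Away.algebraMap_isUnit p').pow n).mul_right_eq_zero).mp h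
  refine ⟨f.range, fun b hb ↦ ⟨algebraMap B _ ⟨b, hb⟩, hf _⟩, .of_equiv (AlgEquiv.ofInjective f hinj),
    ?_, ?_⟩
  · obtain ⟨t, ht⟩ := (IsLocalization.Away.algebraMap_isUnit (S := Localization.Away p')
      p').exists_right_inv
    refine ⟨f t, ⟨t, rfl⟩, ?_⟩
    have := congrArg f ht
    rwa [map_mul, hf, map_one] at this
  · rintro _ ⟨r, rfl⟩
    obtain ⟨n, b, -, h'⟩ := hrep' r
    exact ⟨n, by change p ^ n * f r ∈ B; rw [h']; exact b.2⟩

theorem Derivation.exists_restrict {R L : Type*} [CommRing R] [CommRing L] [Algebra R L]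
    (D : Derivation R L L) (B : Subalgebra R L) (hB : ∀ b ∈ B, D b ∈ B) :
    ∃ D' : Derivation R B B, ∀ b : B, (D' b : L) = D b :=
  ⟨Derivation.mk' ((D.toLinearMap.comp B.val.toLinearMap).codRestrict
    (Subalgebra.toSubmodule B) fun b ↦ hB b b.2) fun a b ↦ Subtype.ext (D.leibniz a b),
    fun _ ↦ rfl⟩

variable {V K L Γ₀ : Type*} [CommRing V] [IsDomain V] [Field K] [Algebra V K] [IsFractionRing V K]
  [CommRing L] [Algebra K L] [Algebra V L] [IsScalarTower V K L]
  [LinearOrderedCommGroupWithZero Γ₀]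

/-- A localization `L` of the polynomial ring `K[X]` over the fraction field of a valuation
ring `V`, together with a (semi-)valuation extending that of `V` without enlarging the value group,
and with the derivation extending `d/dX`. -/
structure ValuedLine (V K L Γ₀ : Type*) [CommRing V] [IsDomain V] [Field K] [Algebra V K]
    [IsFractionRing V K] [CommRing L] [Algebra K L] [Algebra V L] [IsScalarTower V K L]
    [LinearOrderedCommGroupWithZero Γ₀] where
  /-- the inclusion of polynomials -/
  ι : K[X] →ₐ[K] L
  /-- the extension of the formal derivative -/
  δ : Derivation K L L
  /-- the valuation -/
  w : Valuation L Γ₀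
  ι_injective : Function.Injective ι
  δ_ι : ∀ P, δ (ι P) = ι (derivative P)
  w_X_le_one : w (ι X) ≤ 1
  w_algebraMap_le_one : ∀ v : V, w (algebraMap V L v) ≤ 1
  mem_range_of_w_le_one : ∀ c : K, w (algebraMap K L c) ≤ 1 → c ∈ Set.range (algebraMap V K)
  exists_w_eq : ∀ P, w (ι P) ≠ 0 → ∃ c : K, w (algebraMap K L c) = w (ι P)
  isUnit_ι : ∀ P, w (ι P) ≠ 0 → IsUnit (ι P)
  w_natCast : ∀ n : ℕ, n ≠ 0 → w (n : L) = 1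

namespace ValuedLine

variable (E : ValuedLine V K L Γ₀)

/-- A smooth `V`-subalgebra of `L` on which the valuation is at most `1`, stable under `κ • δ`. -/
structure IsChart (B : Subalgebra V L) (κ : K) : Prop where
  smooth : Algebra.Smooth V B
  w_le_one : ∀ b ∈ B, E.w b ≤ 1
  smul_δ_mem : ∀ b ∈ B, (κ • E.δ) b ∈ B
  exists_smul_mem : ∀ P, ∃ c : V, c ≠ 0 ∧ c • E.ι P ∈ B
  exists_mul_eq : ∀ b ∈ B, ∃ P Q, ∃ t ∈ B, E.ι P ∈ B ∧ E.ι P * t = 1 ∧ E.ι P * b = E.ι Q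

/-- Up to a constant, the polynomial `P` is an element of `B` of valuation `1`. -/
def IsStable (B : Subalgebra V L) (P : K[X]) : Prop :=
  ∃ c : K, c ≠ 0 ∧ ∃ u ∈ B, E.w u = 1 ∧ E.ι P = c • u

/-- Up to a constant, the polynomial `P` is an element of `B` some iterated derivative of which
has valuation `1`. -/
def HasContent (B : Subalgebra V L) (κ : K) (P : K[X]) : Prop :=
  ∃ c : K, c ≠ 0 ∧ ∃ u ∈ B, E.ι P = c • u ∧ ∃ i : ℕ, E.w ((⇑(κ • E.δ))^[i] u) = 1

theorem w_smul (c : K) (x : L) : E.w (c • x) = E.w (algebraMap K L c) * E.w x := by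
  rw [Algebra.smul_def, map_mul]

theorem w_algebraMap_ne_zero {c : K} (hc : c ≠ 0) : E.w (algebraMap K L c) ≠ 0 := by
  intro h
  have := E.w.map_one
  rw [← map_one (algebraMap K L), ← mul_inv_cancel₀ hc, map_mul, map_mul, h, zero_mul] at this
  exact zero_ne_one this

theorem smul_mem {B : Subalgebra V L} {c : K} (hc : E.w (algebraMap K L c) ≤ 1) {b : L}
    (hb : b ∈ B) : c • b ∈ B := by
  obtain ⟨v, rfl⟩ := E.mem_range_of_w_le_one c hc
  rw [algebraMap_smul]
  exact B.smul_mem hb v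

variable {E} {B B' : Subalgebra V L} {κ : K} {P : K[X]}

theorem IsStable.mono (h : E.IsStable B P) (hB : B ≤ B') : E.IsStable B' P := by
  obtain ⟨c, hc, u, hu, h⟩ := h
  exact ⟨c, hc, u, hB hu, h⟩

theorem IsChart.exists_localizationAway (h : E.IsChart B κ) (hF : E.ι P ∈ B)
    (hw : E.w (E.ι P) = 1) :
    ∃ B', B ≤ B' ∧ E.IsChart B' κ ∧ ∃ t ∈ B', E.ι P * t = 1 := by
  have := h.smooth
  obtain ⟨B', hB, hs, ⟨t, htB, ht⟩, hx⟩ := B.exists_smooth_localizationAway (E.ι P) hF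
    (E.isUnit_ι P (by rw [hw]; exact one_ne_zero))
  refine ⟨B', hB, ⟨hs, fun x hxB ↦ ?_, fun x hxB ↦ ?_, fun Q ↦ ?_, fun x hxB ↦ ?_⟩, t, htB, ht⟩
  · obtain ⟨n, hn⟩ := hx x hxB
    simpa [hw] using h.w_le_one _ hn
  · obtain ⟨n, hn⟩ := hx x hxB
    have h1 := hB (h.smul_δ_mem _ hn)
    have h2 := hB (h.smul_δ_mem _ hF)
    have htn : E.ι P ^ n * t ^ n = 1 := by rw [← mul_pow, ht, one_pow]
    have : (κ • E.δ) x = t ^ n * ((κ • E.δ) (E.ι P ^ n * x) -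
        (n : L) * E.ι P ^ (n - 1) * (κ • E.δ) (E.ι P) * x) := by
      rw [Derivation.leibniz, Derivation.leibniz_pow]
      simp only [smul_eq_mul, nsmul_eq_mul]
      linear_combination (-(κ • E.δ) x) * htn
    rw [this]
    exact mul_mem (pow_mem htB n) (sub_mem h1 (mul_mem (mul_mem (mul_mem (natCast_mem _ n)
      (pow_mem (hB hF) _)) h2) hxB))
  · obtain ⟨c, hc, hcB⟩ := h.exists_smul_mem Q
    exact ⟨c, hc, hB hcB⟩
  · obtain ⟨n, hn⟩ := hx x hxB
    obtain ⟨S, Q, s, hsB, hSB, hs, hSQ⟩ := h.exists_mul_eq _ hn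
    refine ⟨S * P ^ n, Q, s * t ^ n, mul_mem (hB hsB) (pow_mem htB n), ?_, ?_, ?_⟩
    · rw [map_mul, map_pow]
      exact hB (mul_mem hSB (pow_mem hF n))
    · rw [map_mul, map_pow, mul_mul_mul_comm, hs, ← mul_pow, ht, one_pow, one_mul]
    · rw [map_mul, map_pow, mul_assoc, hSQ]

theorem IsChart.adjoin_insert (h : E.IsChart B κ) (hP : E.ι P ∈ B) {t : L} (ht : t ∈ B)
    (hPt : (κ • E.δ) (E.ι P) * t = 1) {e : V} (he : e ≠ 0) {x : L} (hx : e • x = E.ι P)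
    (hxw : E.w x ≤ 1) :
    E.IsChart (Algebra.adjoin V (insert x (B : Set L))) (algebraMap V K e * κ) := by
  have := h.smooth
  have he' : algebraMap V K e ≠ 0 := by
    rwa [Ne, FaithfulSMul.algebraMap_eq_zero_iff V K]
  set B₁ := Algebra.adjoin V (insert x (B : Set L)) with hB₁
  have hB : B ≤ B₁ := fun b hb ↦ Algebra.subset_adjoin (Set.mem_insert_of_mem _ hb)
  have hxB : x ∈ B₁ := Algebra.subset_adjoin (Set.mem_insert _ _)
  have hδ : ∀ y, ((algebraMap V K e * κ) • E.δ) y = e • (κ • E.δ) y := fun y ↦ by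
    rw [mul_smul, Derivation.smul_apply, algebraMap_smul]
  have hδx : ((algebraMap V K e * κ) • E.δ) x = (κ • E.δ) (E.ι P) := by
    rw [← hx, ← algebraMap_smul K e x, Derivation.map_smul, mul_smul, Derivation.smul_apply]
  refine ⟨?_, fun b hb ↦ ?_, fun b hb ↦ ?_, fun Q ↦ ?_, fun b hb ↦ ?_⟩
  · obtain ⟨D, hD⟩ := Derivation.exists_restrict ((κ • E.δ).restrictScalars V) B h.smul_δ_mem
    refine B.smooth_adjoin_insert_of_isUnit_derivation D ⟨_, hP⟩ ?_ e he x hx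
    exact IsUnit.of_mul_eq_one ⟨t, ht⟩ (Subtype.ext (by
      rw [MulMemClass.coe_mul, hD]
      exact hPt))
  · induction hb using Algebra.adjoin_induction with
    | mem y hy =>
      rcases hy with rfl | hy
      · exact hxw
      · exact h.w_le_one y hy
    | algebraMap v => exact E.w_algebraMap_le_one v
    | add y z _ _ hy hz => exact E.w.map_add_le hy hz
    | mul y z _ _ hy hz => rw [map_mul]; exact mul_le_one' hy hz
  · induction hb using Algebra.adjoin_induction with
    | mem y hy =>
      rcases hy with rfl | hy
      · rw [hδx]
        exact hB (h.smul_δ_mem _ hP)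
      · rw [hδ]
        exact B₁.smul_mem (hB (h.smul_δ_mem _ hy)) e
    | algebraMap v =>
      rw [IsScalarTower.algebraMap_apply V K L, Derivation.map_algebraMap]
      exact zero_mem _
    | add y z _ _ hy hz => rw [map_add]; exact add_mem hy hz
    | mul y z hy' hz' hy hz =>
      rw [Derivation.leibniz]
      exact add_mem (mul_mem hy' hz) (mul_mem hz' hy)
  · obtain ⟨c, hc, hcB⟩ := h.exists_smul_mem Q
    exact ⟨c, hc, hB hcB⟩
  · have : ∃ n : ℕ, e ^ n • b ∈ B := by
      induction hb using Algebra.adjoin_induction with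
      | mem y hy =>
        rcases hy with rfl | hy
        · exact ⟨1, by rwa [pow_one, hx]⟩
        · exact ⟨0, by simpa using hy⟩
      | algebraMap v => exact ⟨0, by simp⟩
      | add y z _ _ hy hz =>
        obtain ⟨n, hn⟩ := hy
        obtain ⟨m, hm⟩ := hz
        refine ⟨m + n, ?_⟩
        rw [smul_add, pow_add]
        refine add_mem ?_ ?_
        · rw [mul_smul]
          exact B.smul_mem hn _
        · rw [mul_comm, mul_smul]
          exact B.smul_mem hm _
      | mul y z _ _ hy hz =>
        obtain ⟨n, hn⟩ := hy
        obtain ⟨m, hm⟩ := hz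
        refine ⟨n + m, ?_⟩
        rw [pow_add, ← smul_mul_smul_comm]
        exact mul_mem hn hm
    obtain ⟨n, hn⟩ := this
    obtain ⟨S, Q, s, hsB, hSB, hs, hSQ⟩ := h.exists_mul_eq _ hn
    refine ⟨S, (algebraMap V K e ^ n)⁻¹ • Q, s, hB hsB, hB hSB, hs, ?_⟩
    rw [map_smul, ← hSQ, mul_smul_comm, ← map_pow, ← algebraMap_smul K (e ^ n) (E.ι S * b),
      smul_smul, inv_mul_cancel₀ (by rw [map_pow]; exact pow_ne_zero n he'),
      one_smul]


theorem isChart_base : E.IsChart (Algebra.adjoin V {E.ι X}) 1 := by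
  have hX : E.ι X ∈ Algebra.adjoin V {E.ι X} := Algebra.self_mem_adjoin_singleton V _
  let F : V[X] →ₐ[V] L := aeval (E.ι X)
  have hF : ∀ p, F p = E.ι (p.map (algebraMap V K)) := fun p ↦ by
    rw [← aeval_X_left_apply (p.map (algebraMap V K)), aeval_map_algebraMap]
    exact aeval_algHom_apply (E.ι.restrictScalars V) X p
  have hinj : Function.Injective F := by
    intro p q hpq
    rw [hF, hF] at hpq
    exact map_injective _ (IsFractionRing.injective V K) (E.ι_injective hpq)
  have hmem : ∀ b ∈ Algebra.adjoin V {E.ι X}, ∃ p, F p = b := fun b hb ↦ by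
    rw [Algebra.adjoin_singleton_eq_range_aeval] at hb
    exact hb
  have hmem' : ∀ p, F p ∈ Algebra.adjoin V {E.ι X} := fun p ↦ by
    rw [Algebra.adjoin_singleton_eq_range_aeval]
    exact ⟨p, rfl⟩
  refine ⟨?_, fun b hb ↦ ?_, fun b hb ↦ ?_, fun Q ↦ ?_, fun b hb ↦ ?_⟩
  · rw [Algebra.adjoin_singleton_eq_range_aeval]
    have : Algebra.Smooth V V[X] := {}
    exact .of_equiv (AlgEquiv.ofInjective F hinj)
  · induction hb using Algebra.adjoin_induction with
    | mem y hy =>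
      rw [Set.mem_singleton_iff.mp hy]
      exact E.w_X_le_one
    | algebraMap v => exact E.w_algebraMap_le_one v
    | add y z _ _ hy hz => exact E.w.map_add_le hy hz
    | mul y z _ _ hy hz => rw [map_mul]; exact mul_le_one' hy hz
  · obtain ⟨p, rfl⟩ := hmem b hb
    rw [one_smul, hF, E.δ_ι, derivative_map, ← hF]
    exact hmem' _
  · obtain ⟨c, hc, q, hq⟩ : ∃ c : V, c ≠ 0 ∧ ∃ q : V[X], q.map (algebraMap V K) = c • Q := by
      obtain ⟨b, hb, hQ⟩ := IsLocalization.integerNormalization_spec (nonZeroDivisors V) Q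
      exact ⟨b, nonZeroDivisors.ne_zero hb, _, hQ⟩
    refine ⟨c, hc, ?_⟩
    have : c • E.ι Q = F q := by
      rw [hF, hq, ← algebraMap_smul K c Q, map_smul, algebraMap_smul]
    rw [this]
    exact hmem' q
  · obtain ⟨p, rfl⟩ := hmem b hb
    exact ⟨1, p.map (algebraMap V K), 1, one_mem _, by simp, by simp, by simp [hF]⟩

end ValuedLine

theorem Valuation.exists_iterate_derivation_eq_one {R L Γ₀ : Type*} [CommRing R] [CommRing L]
    [Algebra R L] [LinearOrderedCommGroupWithZero Γ₀] (w : Valuation L Γ₀) (D : Derivation R L L)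
    (hw : ∀ n : ℕ, n ≠ 0 → w (n : L) = 1) (A : Subring L) (N : AddSubgroup L)
    (hNw : ∀ z ∈ N, w z < 1) (hND : ∀ z ∈ N, D z ∈ N) (x : L) (hNx : ∀ z ∈ N, x * z ∈ N)
    (hA : ∀ a ∈ A, D a ∈ N) (hx : D x ∈ A) (hxw : w (D x) = 1) (d : ℕ) (a : ℕ → L) (p z : L)
    (ha : ∀ j, a j ∈ A) (had : w (a d) = 1) (hz : z ∈ N)
    (hp : p = ∑ j ∈ Finset.range (d + 1), a j * x ^ j + z) : ∃ i : ℕ, w (D^[i] p) = 1 := by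
  induction d generalizing a p z with
  | zero =>
    refine ⟨0, ?_⟩
    rw [Function.iterate_zero_apply, hp]
    simp only [zero_add, Finset.sum_range_one, pow_zero, mul_one]
    rw [Valuation.map_add_eq_of_lt_left w (by rw [had]; exact hNw z hz), had]
  | succ d ih =>
    have hNx' : ∀ (n : ℕ), ∀ z ∈ N, x ^ n * z ∈ N := by
      intro n z hz
      induction n with
      | zero => simpa using hz
      | succ n ih => rw [pow_succ', mul_assoc]; exact hNx _ ih
    obtain ⟨i, hi⟩ := ih (fun j ↦ ((j + 1 : ℕ) : L) * a (j + 1) * D x) (D p)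
      (∑ j ∈ Finset.range (d + 2), x ^ j * D (a j) + D z)
      (fun j ↦ mul_mem (mul_mem (natCast_mem A _) (ha _)) hx)
      (by rw [map_mul, map_mul, had, hxw, hw _ d.succ_ne_zero, mul_one, mul_one])
      (add_mem (sum_mem fun j _ ↦ hNx' j _ (hA _ (ha j))) (hND z hz))
      (by
        rw [hp, map_add, map_sum, ← add_assoc]
        simp only [Derivation.leibniz, Derivation.leibniz_pow, smul_eq_mul, nsmul_eq_mul,
          Finset.sum_add_distrib]
        congr 2
        rw [Finset.sum_range_succ']
        simp only [Nat.add_sub_cancel, Nat.cast_zero, zero_mul, mul_zero, add_zero]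
        exact Finset.sum_congr rfl fun j _ ↦ by ring)
    exact ⟨i + 1, by rwa [Function.iterate_succ_apply]⟩

namespace ValuedLine

variable {E : ValuedLine V K L Γ₀} {B B' : Subalgebra V L} {κ : K} {P : K[X]}

theorem hasContent_of_eq_sum (hw : ∀ b ∈ B, E.w b ≤ 1) (hδ : ∀ b ∈ B, (κ • E.δ) b ∈ B)
    {A : Subalgebra V L} (hAB : A ≤ B)
    (hA : ∀ a ∈ A, ∃ c : K, E.w (algebraMap K L c) < 1 ∧ ∃ b ∈ B, (κ • E.δ) a = c • b)
    {x : L} (hxB : x ∈ B) (hx : (κ • E.δ) x ∈ A) (hxw : E.w ((κ • E.δ) x) = 1) (hP0 : P ≠ 0)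
    (n : ℕ) (c : ℕ → K) (u : ℕ → L) (hu : ∀ j, u j ∈ A) (huw : ∀ j, E.w (u j) = 1)
    (hP : E.ι P = ∑ j ∈ Finset.range n, c j • (u j * x ^ j)) : E.HasContent B κ P := by
  obtain ⟨k, hk, hck⟩ : ∃ k ∈ Finset.range n, c k ≠ 0 := by
    by_contra! h
    rw [Finset.sum_eq_zero fun j hj ↦ by rw [h j hj, zero_smul], ← map_zero E.ι] at hP
    exact hP0 (E.ι_injective hP)
  obtain ⟨m, hm, hmax⟩ := Finset.exists_max_image (Finset.range n)
    (fun j ↦ E.w (algebraMap K L (c j))) ⟨k, hk⟩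
  have hcm : c m ≠ 0 := fun h ↦ by
    have := hmax k hk
    simp only [h, map_zero, le_zero_iff] at this
    exact E.w_algebraMap_ne_zero hck this
  set r : ℕ → K := fun j ↦ if j < n then c j / c m else 0 with hr
  have hrle : ∀ j, E.w (algebraMap K L (r j)) ≤ 1 := fun j ↦ by
    by_cases hj : j < n
    · have := hmax j (Finset.mem_range.mpr hj)
      have h2 : algebraMap K L (c j) = algebraMap K L (r j) * algebraMap K L (c m) := by
        rw [← map_mul, hr]
        simp [hj, hcm]
      rw [h2, map_mul] at this
      exact le_of_mul_le_mul_right (by simpa using this)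
        (zero_lt_iff.mpr (E.w_algebraMap_ne_zero hcm))
    · simp [hr, hj]
  have hrm : r m = 1 := by simp [hr, Finset.mem_range.mp hm, hcm]
  obtain ⟨d, hd, hdmax⟩ := Finset.exists_max_image
    ((Finset.range n).filter fun j ↦ E.w (algebraMap K L (r j)) = 1) id
    ⟨m, by simp [hrm, Finset.mem_range.mp hm]⟩
  simp only [Finset.mem_filter, Finset.mem_range, id] at hd hdmax
  have hterm : ∀ j, r j • (u j * x ^ j) ∈ B := fun j ↦
    E.smul_mem (hrle j) (mul_mem (hAB (hu j)) (pow_mem hxB j))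
  have hlt : ∀ j, d < j → E.w (algebraMap K L (r j)) < 1 := fun j hj ↦ by
    by_cases hjn : j < n
    · exact (hrle j).lt_of_ne fun h ↦ (hdmax j ⟨hjn, h⟩).not_gt hj
    · simp [hr, hjn]
  refine ⟨c m, hcm, ∑ j ∈ Finset.range n, r j • (u j * x ^ j), sum_mem fun j _ ↦ hterm j, ?_, ?_⟩
  · rw [hP, Finset.smul_sum]
    refine Finset.sum_congr rfl fun j hj ↦ ?_
    rw [smul_smul, hr]
    simp only [Finset.mem_range.mp hj, if_true]
    rw [mul_div_cancel₀ _ hcm]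
  set N : AddSubgroup L := AddSubgroup.closure
    {z | ∃ c : K, E.w (algebraMap K L c) < 1 ∧ ∃ b ∈ B, z = c • b} with hN
  have hNmem : ∀ c : K, E.w (algebraMap K L c) < 1 → ∀ b ∈ B, c • b ∈ N := fun c hc b hb ↦
    AddSubgroup.subset_closure ⟨c, hc, b, hb, rfl⟩
  have hNind : ∀ D : L →+ L, (∀ c : K, E.w (algebraMap K L c) < 1 → ∀ b ∈ B, D (c • b) ∈ N) →
      ∀ z ∈ N, D z ∈ N := by
    intro D hD z hz
    have : N ≤ N.comap D := by
      conv_lhs => rw [hN]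
      rw [AddSubgroup.closure_le]
      rintro _ ⟨c, hc, b, hb, rfl⟩
      exact hD c hc b hb
    exact this hz
  refine E.w.exists_iterate_derivation_eq_one (κ • E.δ) E.w_natCast A.toSubring N ?_ ?_ x ?_ ?_ hx
    hxw d (fun j ↦ r j • u j) _ (∑ j ∈ Finset.Ico (d + 1) n, r j • (u j * x ^ j))
    (fun j ↦ E.smul_mem (hrle j) (hu j)) ?_ (sum_mem fun j hj ↦ hNmem _ (hlt j ?_) _ ?_) ?_
  · intro z hz
    induction hz using AddSubgroup.closure_induction with
    | mem z hz =>
      obtain ⟨c, hc, b, hb, rfl⟩ := hz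
      rw [w_smul]
      exact mul_lt_one_of_lt_of_le hc (hw b hb)
    | zero => simp
    | add y z _ _ hy hz => exact E.w.map_add_lt hy hz
    | neg y _ hy => rwa [Valuation.map_neg]
  · refine hNind (κ • E.δ : Derivation K L L).toLinearMap.toAddMonoidHom fun c hc b hb ↦ ?_
    change (κ • E.δ) (c • b) ∈ N
    rw [Derivation.map_smul]
    exact hNmem c hc _ (hδ b hb)
  · refine hNind (AddMonoidHom.mulLeft x) fun c hc b hb ↦ ?_
    change x * c • b ∈ N
    rw [mul_smul_comm]
    exact hNmem c hc _ (mul_mem hxB hb)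
  · intro a ha
    obtain ⟨c, hc, b, hb, h⟩ := hA a ha
    rw [h]
    exact hNmem c hc b hb
  · rw [w_smul, hd.2, huw, one_mul]
  · exact (Finset.mem_Ico.mp hj).1
  · exact mul_mem (hAB (hu j)) (pow_mem hxB j)
  · rw [← Finset.sum_range_add_sum_Ico _ (Nat.succ_le_of_lt hd.1)]
    congr 1
    exact Finset.sum_congr rfl fun j _ ↦ (smul_mul_assoc _ _ _).symm

end ValuedLine

theorem Polynomial.exists_eq_sum_mul_pow {K : Type*} [Field K] {f : K[X]} (hf : f.Monic)
    (hf0 : f.natDegree ≠ 0) (P : K[X]) : ∃ (n : ℕ) (a : ℕ → K[X]),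
      (∀ j, (a j).natDegree < f.natDegree) ∧ P = ∑ j ∈ Finset.range n, a j * f ^ j := by
  induction h : P.natDegree using Nat.strong_induction_on generalizing P with
  | _ d ih =>
    by_cases hd : P.natDegree < f.natDegree
    · exact ⟨1, fun _ ↦ P, fun _ ↦ hd, by simp⟩
    · have hlt : (P /ₘ f).natDegree < d := by
        rw [natDegree_divByMonic P hf]
        omega
      obtain ⟨n, a, ha, hP⟩ := ih _ hlt (P /ₘ f) rfl
      refine ⟨n + 1, fun j ↦ Nat.casesOn j (P %ₘ f) a, fun j ↦ ?_, ?_⟩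
      · cases j with
        | zero => exact natDegree_modByMonic_lt P hf (fun h ↦ hf0 (by rw [h, natDegree_one]))
        | succ j => exact ha j
      · conv_lhs => rw [← modByMonic_add_div P f, hP]
        rw [Finset.sum_range_succ', Finset.mul_sum, add_comm, pow_zero, mul_one]
        congr 1
        exact Finset.sum_congr rfl fun j _ ↦ by rw [pow_succ]; ring

namespace ValuedLine

variable {E : ValuedLine V K L Γ₀} {B B' : Subalgebra V L} {κ : K} {P : K[X]}

theorem iterate_smul_δ_ι (P : K[X]) (i : ℕ) :
    (⇑(κ • E.δ))^[i] (E.ι P) = κ ^ i • E.ι (derivative^[i] P) := by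
  induction i with
  | zero => simp
  | succ i ih =>
    rw [Function.iterate_succ_apply', ih, Function.iterate_succ_apply', Derivation.map_smul,
      Derivation.smul_apply, E.δ_ι, smul_smul, pow_succ]

theorem iterate_smul_δ_smul (c : K) (x : L) (i : ℕ) :
    (⇑(κ • E.δ))^[i] (c • x) = c • (⇑(κ • E.δ))^[i] x := by
  induction i with
  | zero => rfl
  | succ i ih => rw [Function.iterate_succ_apply', ih, Function.iterate_succ_apply',
      Derivation.map_smul]

theorem IsChart.iterate_mem (h : E.IsChart B κ) {u : L} (hu : u ∈ B) (i : ℕ) :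
    (⇑(κ • E.δ))^[i] u ∈ B := by
  induction i with
  | zero => exact hu
  | succ i ih => rw [Function.iterate_succ_apply']; exact h.smul_δ_mem _ ih

theorem IsStable.smul (h : E.IsStable B P) {c : K} (hc : c ≠ 0) : E.IsStable B (c • P) := by
  obtain ⟨d, hd, u, hu, huw, hP⟩ := h
  exact ⟨c * d, mul_ne_zero hc hd, u, hu, huw, by rw [map_smul, hP, smul_smul]⟩

theorem IsStable.sub {Q : K[X]} (hP : E.IsStable B P) (hQ : E.IsStable B Q)
    (h : E.w (E.ι P) ≤ E.w (E.ι (P - Q))) : E.IsStable B (P - Q) := by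
  have hQle : E.w (E.ι Q) ≤ E.w (E.ι (P - Q)) := by
    have := E.w.map_sub (E.ι P) (E.ι (P - Q))
    rw [← map_sub, sub_sub_cancel, max_eq_right h] at this
    exact this
  obtain ⟨c, hc, u, hu, huw, hP⟩ := hP
  obtain ⟨d, hd, v, hv, hvw, hQ⟩ := hQ
  have hle := E.w.map_sub (E.ι P) (E.ι Q)
  rw [map_sub] at h hQle
  have hc' := E.w_algebraMap_ne_zero hc
  have hd' := E.w_algebraMap_ne_zero hd
  have hcw : E.w (E.ι P) = E.w (algebraMap K L c) := by rw [hP, w_smul, huw, mul_one]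
  have hdw : E.w (E.ι Q) = E.w (algebraMap K L d) := by rw [hQ, w_smul, hvw, mul_one]
  have hdiv : ∀ a b : K, b ≠ 0 → E.w (algebraMap K L a) ≤ E.w (algebraMap K L b) →
      E.w (algebraMap K L (b⁻¹ * a)) ≤ 1 := fun a b hb hab ↦ by
    have hb' := E.w_algebraMap_ne_zero hb
    refine le_of_mul_le_mul_left (a := E.w (algebraMap K L b)) ?_ (zero_lt_iff.mpr hb')
    rwa [← map_mul, ← map_mul, mul_inv_cancel_left₀ hb, mul_one]
  have hfin : ∀ (b : K) (z : L), b ≠ 0 → z ∈ B → E.ι (P - Q) = b • z →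
      E.w (E.ι (P - Q)) = E.w (algebraMap K L b) → E.IsStable B (P - Q) := by
    intro b z hb hz h1 h2
    refine ⟨b, hb, z, hz, ?_, h1⟩
    rw [h1, w_smul] at h2
    exact (mul_eq_left₀ (E.w_algebraMap_ne_zero hb)).mp h2
  rcases le_total (E.w (algebraMap K L d)) (E.w (algebraMap K L c)) with hcd | hcd
  · refine hfin c (u - (c⁻¹ * d) • v) hc (sub_mem hu (E.smul_mem (hdiv d c hc hcd) hv)) ?_ ?_
    · rw [map_sub, hP, hQ, smul_sub, smul_smul, mul_inv_cancel_left₀ hc]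
    · rw [hcw, hdw, max_eq_left hcd] at hle
      rw [map_sub]
      exact le_antisymm hle (hcw ▸ h)
  · refine hfin d ((d⁻¹ * c) • u - v) hd (sub_mem (E.smul_mem (hdiv c d hd hcd) hu) hv) ?_ ?_
    · rw [map_sub, hP, hQ, smul_sub, smul_smul, mul_inv_cancel_left₀ hd]
    · rw [hcw, hdw, max_eq_right hcd] at hle
      rw [map_sub]
      exact le_antisymm hle (hdw ▸ hQle)

theorem HasContent.of_base (hP : P ≠ 0) : E.HasContent (Algebra.adjoin V {E.ι X}) 1 P := by
  have h := isChart_base (E := E)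
  have hδ : ((1 : K) • E.δ) (E.ι X) = 1 := by
    rw [one_smul, E.δ_ι, derivative_X, map_one]
  refine hasContent_of_eq_sum (A := ⊥) h.w_le_one h.smul_δ_mem bot_le (fun a ha ↦ ?_)
    (Algebra.self_mem_adjoin_singleton V (E.ι X)) (by rw [hδ]; exact one_mem _)
    (by rw [hδ, map_one]) hP (P.natDegree + 1) P.coeff (fun _ ↦ 1) (fun _ ↦ one_mem _)
    (fun _ ↦ map_one _) ?_
  · obtain ⟨v, rfl⟩ := Algebra.mem_bot.mp ha
    refine ⟨0, by simp, 0, zero_mem _, ?_⟩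
    rw [IsScalarTower.algebraMap_apply V K L, Derivation.map_algebraMap, smul_zero]
  · conv_lhs => rw [P.as_sum_range_C_mul_X_pow, map_sum]
    refine Finset.sum_congr rfl fun j _ ↦ ?_
    rw [← smul_eq_C_mul, map_smul, map_pow, one_mul]

theorem IsChart.exists_w_eq_one_or (h : E.IsChart B κ) (hP : E.HasContent B κ P)
    (hder : ∀ i, derivative^[i + 1] P ≠ 0 → E.IsStable B (derivative^[i + 1] P)) :
    ∃ c : K, c ≠ 0 ∧ ∃ u ∈ B, E.ι P = c • u ∧
      (E.w u = 1 ∨ E.w u < 1 ∧ E.w ((κ • E.δ) u) = 1) := by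
  classical
  obtain ⟨c, hc, u, hu, hPu, hex⟩ := hP
  refine ⟨c, hc, u, hu, hPu, ?_⟩
  have hmin := fun j ↦ Nat.find_min hex (m := j)
  have hi := Nat.find_spec hex
  match hi' : Nat.find hex with
  | 0 =>
    rw [hi'] at hi
    exact Or.inl hi
  | 1 =>
    rw [hi'] at hi hmin
    exact Or.inr ⟨(h.w_le_one u hu).lt_of_ne (hmin 0 zero_lt_one), hi⟩
  | j + 2 =>
    exfalso
    rw [hi'] at hi hmin
    have hlt := (h.w_le_one _ (h.iterate_mem hu (j + 1))).lt_of_ne (hmin (j + 1) (by omega))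
    rw [Function.iterate_succ_apply'] at hi
    have hu' : u = c⁻¹ • E.ι P := by rw [hPu, smul_smul, inv_mul_cancel₀ hc, one_smul]
    have hit : (⇑(κ • E.δ))^[j + 1] u = (c⁻¹ * κ ^ (j + 1)) • E.ι (derivative^[j + 1] P) := by
      rw [hu', iterate_smul_δ_smul, iterate_smul_δ_ι, smul_smul]
    by_cases h0 : derivative^[j + 1] P = 0
    · rw [hit, h0, map_zero, smul_zero, map_zero, map_zero] at hi
      exact zero_ne_one hi
    · obtain ⟨d, hd, v, hv, hvw, hdv⟩ := hder j h0
      rw [hit, hdv, smul_smul] at hi hlt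
      rw [w_smul, hvw, mul_one] at hlt
      rw [Derivation.map_smul, w_smul] at hi
      exact (mul_lt_one_of_lt_of_le hlt (h.w_le_one _ (h.smul_δ_mem v hv))).ne hi

theorem IsChart.exists_isStable (h : E.IsChart B κ) {f : K[X]}
    {c : K} (hc : c ≠ 0) {u : L} (hu : u ∈ B) (hfu : E.ι f = c • u)
    (hor : E.w u = 1 ∨ E.w u < 1 ∧ E.w ((κ • E.δ) u) = 1) (hw : E.w (E.ι f) ≠ 0)
    (𝓟 : Set K[X]) (h𝓟 : ∀ P ∈ 𝓟, P ≠ 0 ∧ E.HasContent B κ P ∧ ∃ (n : ℕ) (a : ℕ → K[X]),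
      (∀ j ∈ Finset.range n, a j ≠ 0 → E.IsStable B (a j)) ∧
      P = ∑ j ∈ Finset.range n, a j * f ^ j) :
    ∃ B' κ', B ≤ B' ∧ E.IsChart B' κ' ∧ E.IsStable B' f ∧ ∀ P ∈ 𝓟, E.HasContent B' κ' P := by
  rcases hor with huw | ⟨huw, huδ⟩
  · exact ⟨B, κ, le_rfl, h, ⟨c, hc, u, hu, huw, hfu⟩, fun P hP ↦ (h𝓟 P hP).2.1⟩
  have hu' : u = E.ι (c⁻¹ • f) := by rw [map_smul, hfu, smul_smul, inv_mul_cancel₀ hc, one_smul]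
  have huw0 : E.w u ≠ 0 := fun h0 ↦ hw (by rw [hfu, w_smul, h0, mul_zero])
  obtain ⟨d, hd⟩ := E.exists_w_eq (c⁻¹ • f) (by rwa [← hu'])
  rw [← hu'] at hd
  have hd0 : d ≠ 0 := by
    rintro rfl
    rw [map_zero, map_zero] at hd
    exact huw0 hd.symm
  obtain ⟨e, rfl⟩ := E.mem_range_of_w_le_one d (by rw [hd]; exact huw.le)
  have he0 : e ≠ 0 := by
    rintro rfl
    exact hd0 (map_zero _)
  have hδu : (κ • E.δ) u = E.ι (κ • derivative (c⁻¹ • f)) := by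
    rw [map_smul, ← E.δ_ι, ← hu', Derivation.smul_apply]
  obtain ⟨B', hB, hB', t, htB, ht⟩ := h.exists_localizationAway
    (by rw [← hδu]; exact h.smul_δ_mem u hu) (by rw [← hδu]; exact huδ)
  set d := algebraMap V K e with hde
  set x : L := d⁻¹ • u with hx
  have hxe : e • x = E.ι (c⁻¹ • f) := by
    rw [hx, ← algebraMap_smul K e, smul_smul, mul_inv_cancel₀ hd0, one_smul, hu']
  have hux : u = d • x := by rw [hx, smul_smul, mul_inv_cancel₀ hd0, one_smul]
  have hxw : E.w x = 1 := by
    have := congrArg E.w hux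
    rw [w_smul, hd] at this
    exact (mul_eq_left₀ huw0).mp this.symm
  have hB₁ := hB'.adjoin_insert (P := c⁻¹ • f) (by rw [← hu']; exact hB hu) htB
    (by rw [← hu', hδu]; exact ht) he0 hxe hxw.le
  have hBB₁ : B' ≤ Algebra.adjoin V (insert x (B' : Set L)) := fun b hb ↦
    Algebra.subset_adjoin (Set.mem_insert_of_mem _ hb)
  have hxB : x ∈ Algebra.adjoin V (insert x (B' : Set L)) :=
    Algebra.subset_adjoin (Set.mem_insert _ _)
  have hfx : E.ι f = (c * d) • x := by rw [hfu, hux, smul_smul]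
  have hδx : ((d * κ) • E.δ) x = (κ • E.δ) u := by
    rw [hx, Derivation.map_smul, mul_smul, Derivation.smul_apply, smul_smul,
      inv_mul_cancel₀ hd0, one_smul]
  refine ⟨_, _, hB.trans hBB₁, hB₁, ⟨c * d, mul_ne_zero hc hd0, x, hxB, hxw, hfx⟩, fun P hP ↦ ?_⟩
  obtain ⟨hP0, -, n, a, ha, hPa⟩ := h𝓟 P hP
  have : ∀ j, ∃ (c : K) (v : L), v ∈ B ∧ E.w v = 1 ∧ (j ∈ Finset.range n → E.ι (a j) = c • v) := by
    intro j
    by_cases hj : j ∈ Finset.range n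
    · by_cases h0 : a j = 0
      · exact ⟨0, 1, one_mem _, map_one _, fun _ ↦ by rw [h0, map_zero, zero_smul]⟩
      · obtain ⟨c, -, v, hv, hvw, h⟩ := ha j hj h0
        exact ⟨c, v, hv, hvw, fun _ ↦ h⟩
    · exact ⟨0, 1, one_mem _, map_one _, fun h ↦ absurd h hj⟩
  choose r v hv hvw hr using this
  refine hasContent_of_eq_sum hB₁.w_le_one hB₁.smul_δ_mem hBB₁ (fun b hb ↦ ⟨d, ?_, (κ • E.δ) b,
    hBB₁ (hB'.smul_δ_mem b hb), ?_⟩) hxB ?_ ?_ hP0 n (fun j ↦ r j * (c * d) ^ j) v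
    (fun j ↦ hB (hv j)) hvw ?_
  · rwa [hd]
  · rw [mul_smul, Derivation.smul_apply]
  · rw [hδx]
    exact hB (h.smul_δ_mem u hu)
  · rwa [hδx]
  · rw [hPa, map_sum]
    refine Finset.sum_congr rfl fun j hj ↦ ?_
    rw [map_mul, map_pow, hr j hj, hfx, _root_.smul_pow, smul_mul_smul_comm]

theorem exists_isChart (E : ValuedLine V K L Γ₀) (n : ℕ)
    (hn : ∀ Q : K[X], Q ≠ 0 → Q.natDegree ≤ n → E.w (E.ι Q) ≠ 0) (𝓠 𝓟 : Set K[X])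
    (h𝓠f : 𝓠.Finite) (h𝓟f : 𝓟.Finite) (h𝓠 : ∀ Q ∈ 𝓠, Q ≠ 0 ∧ Q.natDegree ≤ n)
    (h𝓟 : ∀ P ∈ 𝓟, P ≠ 0) : ∃ (B : Subalgebra V L) (κ : K), E.IsChart B κ ∧
      (∀ Q ∈ 𝓠, E.IsStable B Q) ∧ ∀ P ∈ 𝓟, E.HasContent B κ P := by
  induction n generalizing 𝓠 𝓟 with
  | zero =>
    refine ⟨_, 1, isChart_base, fun Q hQ ↦ ?_, fun P hP ↦ .of_base (h𝓟 P hP)⟩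
    obtain ⟨hQ0, hdeg⟩ := h𝓠 Q hQ
    obtain ⟨c, rfl⟩ := natDegree_eq_zero.mp (Nat.le_zero.mp hdeg)
    refine ⟨c, fun h ↦ hQ0 (by rw [h, C_0]), 1, one_mem _, map_one _, ?_⟩
    rw [C_eq_algebraMap, AlgHom.commutes, Algebra.algebraMap_eq_smul_one]
  | succ n ih =>
    have hn' : ∀ Q : K[X], Q ≠ 0 → Q.natDegree ≤ n → E.w (E.ι Q) ≠ 0 := fun Q h0 h ↦
      hn Q h0 (h.trans n.le_succ)
    rcases Set.eq_empty_or_nonempty {Q ∈ 𝓠 | Q.natDegree = n + 1} with hem | hne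
    · refine ih hn' 𝓠 𝓟 h𝓠f h𝓟f (fun Q hQ ↦ ⟨(h𝓠 Q hQ).1, ?_⟩) h𝓟
      have : ¬ (Q ∈ 𝓠 ∧ Q.natDegree = n + 1) := fun h ↦ (Set.eq_empty_iff_forall_notMem.mp hem) Q h
      have := (h𝓠 Q hQ).2
      grind
    let ν : K[X] → K[X] := fun Q ↦ Q.leadingCoeff⁻¹ • Q
    have hν : ∀ Q ∈ 𝓠, Q.natDegree = n + 1 → (ν Q).Monic ∧ (ν Q).natDegree = n + 1 := by
      intro Q hQ hdeg
      have h0 := leadingCoeff_ne_zero.mpr (h𝓠 Q hQ).1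
      refine ⟨?_, ?_⟩
      · rw [Monic, show ν Q = C Q.leadingCoeff⁻¹ * Q from smul_eq_C_mul _, leadingCoeff_mul,
          leadingCoeff_C, inv_mul_cancel₀ h0]
      · rw [natDegree_smul _ (inv_ne_zero h0), hdeg]
    obtain ⟨Q₀, ⟨hQ₀, hQ₀d⟩, hmin⟩ := Set.exists_min_image _ (fun Q ↦ E.w (E.ι (ν Q)))
      (h𝓠f.subset (Set.sep_subset 𝓠 fun Q ↦ Q.natDegree = n + 1)) hne
    obtain ⟨hf, hfd⟩ := hν Q₀ hQ₀ hQ₀d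
    set f := ν Q₀ with hfdef
    choose N a ha hPa using fun P : K[X] ↦ exists_eq_sum_mul_pow hf (by omega) P
    let 𝓠₁ : Set K[X] := 𝓠 ∪ (fun Q ↦ f - ν Q) '' {Q ∈ 𝓠 | Q.natDegree = n + 1} ∪
      (fun i ↦ derivative^[i + 1] f) '' Set.Iic (n + 1) ∪ ⋃ P ∈ 𝓟, a P '' Set.Iio (N P)
    have h𝓠₁f : 𝓠₁.Finite := ((h𝓠f.union ((h𝓠f.subset (Set.sep_subset 𝓠 _)).image _)).union
      ((Set.finite_Iic _).image _)).union (h𝓟f.biUnion fun P _ ↦ (Set.finite_Iio _).image _)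
    obtain ⟨B, κ, hB, hBst, hBco⟩ := ih hn' {Q ∈ 𝓠₁ | Q ≠ 0 ∧ Q.natDegree ≤ n} (insert f 𝓟)
      (h𝓠₁f.subset (Set.sep_subset _ _)) (h𝓟f.insert f) (fun Q hQ ↦ hQ.2) (by
        rintro P (rfl | hP)
        · exact hf.ne_zero
        · exact h𝓟 P hP)
    have hder : ∀ i, derivative^[i + 1] f ≠ 0 → E.IsStable B (derivative^[i + 1] f) := by
      refine fun i hi ↦ hBst _ ⟨Or.inl (Or.inr ⟨i, ?_, rfl⟩), hi, ?_⟩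
      · by_contra h
        exact hi (iterate_derivative_eq_zero (by rw [Set.mem_Iic] at h; omega))
      · have := natDegree_iterate_derivative f (i + 1)
        omega
    obtain ⟨c, hc, u, hu, hfu, hor⟩ :=
      hB.exists_w_eq_one_or (hBco f (Set.mem_insert _ _)) hder
    have hcoeff : ∀ P ∈ 𝓟, ∀ j ∈ Finset.range (N P), a P j ≠ 0 → E.IsStable B (a P j) := by
      refine fun P hP j hj h0 ↦
        hBst _ ⟨Or.inr (Set.mem_biUnion hP ⟨j, Finset.mem_range.mp hj, rfl⟩), h0, ?_⟩
      have := ha P j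
      omega
    obtain ⟨B', κ', hBB', hB', hfst, hB'co⟩ := hB.exists_isStable hc hu hfu hor
      (hn f hf.ne_zero hfd.le) 𝓟 fun P hP ↦ ⟨h𝓟 P hP, hBco P (Set.mem_insert_of_mem _ hP), N P, a P,
        hcoeff P hP, hPa P⟩
    refine ⟨B', κ', hB', fun Q hQ ↦ ?_, hB'co⟩
    obtain ⟨hQ0, hQd⟩ := h𝓠 Q hQ
    rcases hQd.lt_or_eq with hlt | heq
    · exact (hBst Q ⟨Or.inl (Or.inl (Or.inl hQ)), hQ0, by omega⟩).mono hBB'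
    · obtain ⟨hQm, hQd'⟩ := hν Q hQ heq
      have hst : E.IsStable B' (ν Q) := by
        by_cases h0 : f - ν Q = 0
        · rwa [← sub_eq_zero.mp h0]
        · have hp : E.IsStable B (f - ν Q) := by
            refine hBst _ ⟨Or.inl (Or.inl (Or.inr ⟨Q, ⟨hQ, heq⟩, rfl⟩)), h0, ?_⟩
            have hlt : (f - ν Q).degree < f.degree := degree_sub_lt_left
              (by rw [degree_eq_natDegree hf.ne_zero, degree_eq_natDegree hQm.ne_zero, hfd, hQd'])
              hf.ne_zero (hf.trans hQm.symm)
            have := natDegree_lt_natDegree h0 hlt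
            omega
          have := hfst.sub (hp.mono hBB') (by
            rw [sub_sub_cancel]
            exact hmin Q ⟨hQ, heq⟩)
          rwa [sub_sub_cancel] at this
      have hlc := leadingCoeff_ne_zero.mpr hQ0
      have := hst.smul hlc
      rwa [smul_smul, mul_inv_cancel₀ hlc, one_smul] at this

theorem IsChart.exists_forall_isStable_inv (h : E.IsChart B κ) {𝓠 : Set K[X]} (hf : 𝓠.Finite)
    (h𝓠 : ∀ Q ∈ 𝓠, E.IsStable B Q) : ∃ B', B ≤ B' ∧ E.IsChart B' κ ∧
      ∀ Q ∈ 𝓠, ∃ c : K, c ≠ 0 ∧ ∃ u ∈ B', E.w u = 1 ∧ E.ι Q = c • u ∧ ∃ t ∈ B', u * t = 1 := by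
  induction 𝓠, hf using Set.Finite.induction_on with
  | empty => exact ⟨B, le_rfl, h, by simp⟩
  | @insert Q 𝓠 hQ hf ih =>
    obtain ⟨B₁, hB₁, hc₁, h₁⟩ := ih fun Q hQ ↦ h𝓠 Q (Set.mem_insert_of_mem _ hQ)
    obtain ⟨c, hc, u, hu, huw, hQu⟩ := h𝓠 Q (Set.mem_insert _ _)
    have hu' : E.ι (c⁻¹ • Q) = u := by rw [map_smul, hQu, smul_smul, inv_mul_cancel₀ hc, one_smul]
    obtain ⟨B₂, hB₂, hc₂, t, ht, hut⟩ := hc₁.exists_localizationAway (P := c⁻¹ • Q)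
      (by rw [hu']; exact hB₁ hu) (by rwa [hu'])
    refine ⟨B₂, hB₁.trans hB₂, hc₂, ?_⟩
    rintro R (rfl | hR)
    · exact ⟨c, hc, u, hB₂ (hB₁ hu), huw, hQu, t, ht, by rwa [← hu']⟩
    · obtain ⟨c, hc, u, hu, huw, hQu, t, ht, hut⟩ := h₁ R hR
      exact ⟨c, hc, u, hB₂ hu, huw, hQu, t, hB₂ ht, hut⟩

theorem IsChart.exists_forall_mul_eq (h : E.IsChart B κ) {S : Set (K[X] × K[X])} (hS : S.Finite)
    (hle : ∀ s ∈ S, E.w (E.ι s.1) ≤ E.w (E.ι s.2))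
    (h₁ : ∀ s ∈ S, s.1 ≠ 0 → E.IsStable B s.1) (h₂ : ∀ s ∈ S, E.IsStable B s.2) :
    ∃ B', B ≤ B' ∧ E.IsChart B' κ ∧ ∀ s ∈ S, ∃ b ∈ B', E.ι s.2 * b = E.ι s.1 := by
  obtain ⟨B', hB, hB', h'⟩ := h.exists_forall_isStable_inv (hS.image Prod.snd) (by
    rintro _ ⟨s, hs, rfl⟩
    exact h₂ s hs)
  refine ⟨B', hB, hB', fun s hs ↦ ?_⟩
  by_cases h0 : s.1 = 0
  · exact ⟨0, zero_mem _, by rw [h0, map_zero, mul_zero]⟩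
  obtain ⟨c, hc, u, hu, huw, hcu⟩ := h₁ s hs h0
  obtain ⟨d, hd, v, hv, hvw, hdv, t, ht, hvt⟩ := h' s.2 ⟨s, hs, rfl⟩
  refine ⟨(d⁻¹ * c) • (u * t), E.smul_mem ?_ (mul_mem (hB hu) ht), ?_⟩
  · have := hle s hs
    rw [hcu, hdv, w_smul, w_smul, huw, hvw, mul_one, mul_one] at this
    refine le_of_mul_le_mul_left (a := E.w (algebraMap K L d)) ?_
      (zero_lt_iff.mpr (E.w_algebraMap_ne_zero hd))
    rwa [← map_mul, ← map_mul, mul_inv_cancel_left₀ hd, mul_one]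
  · rw [hdv, hcu, smul_mul_smul_comm, mul_inv_cancel_left₀ hd, mul_left_comm, hvt, mul_one]

variable {M : Type*} [CommRing M] [Algebra V M]

theorem exists_smooth_of_transcendental (E : ValuedLine V K L Γ₀) (φ : L →ₐ[V] M)
    (hφ : ∀ x, φ x = 0 ↔ E.w x = 0) (h0 : ∀ Q : K[X], Q ≠ 0 → E.w (E.ι Q) ≠ 0)
    {S : Set (K[X] × K[X])} (hS : S.Finite) (hS0 : ∀ s ∈ S, s.2 ≠ 0)
    (hle : ∀ s ∈ S, E.w (E.ι s.1) ≤ E.w (E.ι s.2)) :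
    ∃ B : Subalgebra V L, (∀ b ∈ B, E.w b ≤ 1) ∧ Algebra.Smooth V (φ.comp B.val).range ∧
      ∀ s ∈ S, ∃ b ∈ B, E.ι s.2 * b = E.ι s.1 := by
  have hfin : (Prod.fst '' S ∪ Prod.snd '' S).Finite := (hS.image _).union (hS.image _)
  obtain ⟨n, hn⟩ := (hfin.image natDegree).bddAbove
  obtain ⟨B, κ, hB, hst, -⟩ := E.exists_isChart n (fun Q h _ ↦ h0 Q h)
    ({Q ∈ Prod.fst '' S ∪ Prod.snd '' S | Q ≠ 0}) ∅ (hfin.subset (Set.sep_subset _ _))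
    Set.finite_empty (fun Q hQ ↦ ⟨hQ.2, hn ⟨Q, hQ.1, rfl⟩⟩) (by simp)
  obtain ⟨B', hBB', hB', hmem⟩ := hB.exists_forall_mul_eq hS hle
    (fun s hs h ↦ hst _ ⟨Or.inl ⟨s, hs, rfl⟩, h⟩)
    (fun s hs ↦ hst _ ⟨Or.inr ⟨s, hs, rfl⟩, hS0 s hs⟩)
  refine ⟨B', hB'.w_le_one, ?_, hmem⟩
  have := hB'.smooth
  refine .of_equiv (AlgEquiv.ofInjective (φ.comp B'.val) ?_)
  rw [injective_iff_map_eq_zero]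
  rintro ⟨b, hb⟩ hφb
  have hφb' : E.w b = 0 := (hφ b).mp hφb
  obtain ⟨P, Q, t, -, -, ht, hPQ⟩ := hB'.exists_mul_eq b hb
  have hQ : Q = 0 := by
    by_contra hne
    apply h0 Q hne
    rw [← hPQ, map_mul, hφb', mul_zero]
  refine Subtype.ext ?_
  rw [hQ, map_zero] at hPQ
  change b = 0
  calc b = E.ι P * t * b := by rw [ht, one_mul]
    _ = t * (E.ι P * b) := by ring
    _ = 0 := by rw [hPQ, mul_zero]

theorem exists_smooth_of_isAlgebraic (E : ValuedLine V K L Γ₀) (φ : L →ₐ[V] M)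
    (hφ : ∀ x, φ x = 0 ↔ E.w x = 0) {f : K[X]} (hf : f ≠ 0)
    (h0 : ∀ Q : K[X], E.w (E.ι Q) = 0 ↔ f ∣ Q)
    {S : Set (K[X] × K[X])} (hS : S.Finite) (hS0 : ∀ s ∈ S, s.2 ≠ 0)
    (hdeg : ∀ s ∈ S, s.1.natDegree < f.natDegree ∧ s.2.natDegree < f.natDegree)
    (hle : ∀ s ∈ S, E.w (E.ι s.1) ≤ E.w (E.ι s.2)) :
    ∃ B : Subalgebra V L, (∀ b ∈ B, E.w b ≤ 1) ∧ Algebra.Smooth V (φ.comp B.val).range ∧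
      ∀ s ∈ S, ∃ b ∈ B, E.ι s.2 * b = E.ι s.1 := by
  have hfd : f.natDegree ≠ 0 := fun h ↦ by
    have h1 : E.w (E.ι 1) = 0 := (h0 1).mpr
      (isUnit_iff_dvd_one.mp (isUnit_iff_degree_eq_zero.mpr (by
        rw [degree_eq_natDegree hf, h, Nat.cast_zero])))
    rw [map_one, map_one] at h1
    exact one_ne_zero h1
  have hfin : (Prod.fst '' S ∪ Prod.snd '' S ∪
      (fun i ↦ derivative^[i + 1] f) '' Set.Iic f.natDegree).Finite :=
    ((hS.image _).union (hS.image _)).union ((Set.finite_Iic _).image _)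
  obtain ⟨B, κ, hB, hst, hco⟩ := E.exists_isChart (f.natDegree - 1)
    (fun Q h hd hw ↦ by
      have := natDegree_le_of_dvd ((h0 Q).mp hw) h
      omega)
    _ {f} (hfin.subset (Set.sep_subset _ fun Q ↦ Q ≠ 0 ∧ Q.natDegree < f.natDegree))
    (Set.finite_singleton f) (fun Q hQ ↦ ⟨hQ.2.1, Nat.le_sub_one_of_lt hQ.2.2⟩) (by simpa using hf)
  have hder : ∀ i, derivative^[i + 1] f ≠ 0 → E.IsStable B (derivative^[i + 1] f) := by
    refine fun i hi ↦ hst _ ⟨Or.inr ⟨i, ?_, rfl⟩, hi, ?_⟩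
    · by_contra h
      exact hi (iterate_derivative_eq_zero (by rw [Set.mem_Iic] at h; omega))
    · have := natDegree_iterate_derivative f (i + 1)
      omega
  obtain ⟨c, hc, u, hu, hfu, hor⟩ := hB.exists_w_eq_one_or (hco f rfl) hder
  have huw : E.w u = 0 := by
    have := (h0 f).mpr dvd_rfl
    rw [hfu, w_smul] at this
    exact (mul_eq_zero.mp this).resolve_left (E.w_algebraMap_ne_zero hc)
  have hδw : E.w ((κ • E.δ) u) = 1 := by
    rcases hor with h | h
    · exact absurd (huw.symm.trans h) zero_ne_one
    · exact h.2
  have hδu : (κ • E.δ) u = E.ι (κ • derivative (c⁻¹ • f)) := by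
    have hu' : u = E.ι (c⁻¹ • f) := by rw [map_smul, hfu, smul_smul, inv_mul_cancel₀ hc, one_smul]
    rw [map_smul, ← E.δ_ι, ← hu', Derivation.smul_apply]
  obtain ⟨B₁, hBB₁, hB₁, t, ht, hut⟩ := hB.exists_localizationAway
    (by rw [← hδu]; exact hB.smul_δ_mem u hu) (by rw [← hδu]; exact hδw)
  obtain ⟨B₂, hB₁₂, hB₂, hmem⟩ := hB₁.exists_forall_mul_eq hS hle
    (fun s hs h ↦ (hst _ ⟨Or.inl (Or.inl ⟨s, hs, rfl⟩), h, (hdeg s hs).1⟩).mono hBB₁)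
    (fun s hs ↦ (hst _ ⟨Or.inl (Or.inr ⟨s, hs, rfl⟩), hS0 s hs, (hdeg s hs).2⟩).mono hBB₁)
  refine ⟨B₂, hB₂.w_le_one, ?_, hmem⟩
  have := hB₂.smooth
  obtain ⟨D, hD⟩ := Derivation.exists_restrict ((κ • E.δ).restrictScalars V) B₂ hB₂.smul_δ_mem
  have huB : u ∈ B₂ := hB₁₂ (hBB₁ hu)
  have hsm := Algebra.Smooth.quotient_span_singleton_of_isUnit_derivation D ⟨u, huB⟩
    (IsUnit.of_mul_eq_one ⟨t, hB₁₂ ht⟩ (Subtype.ext (by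
      rw [MulMemClass.coe_mul, hD]
      change (κ • E.δ) u * t = 1
      rw [hδu, hut])))
  refine Algebra.Smooth.range_of_quotient_span_singleton _ hsm (φ.comp B₂.val)
    ((hφ u).mpr huw) ?_
  rintro ⟨b, hb⟩ hφb
  have hbw : E.w b = 0 := (hφ b).mp hφb
  obtain ⟨P, Q, s, hs, -, hPs, hPQ⟩ := hB₂.exists_mul_eq b hb
  obtain ⟨R, rfl⟩ := (h0 Q).mp (by rw [← hPQ, map_mul, hbw, mul_zero])
  obtain ⟨N, hN, hNR⟩ := hB₂.exists_smul_mem R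
  obtain ⟨d, hd, a, hda⟩ : ∃ d : V, d ≠ 0 ∧ ∃ a : V, algebraMap V K a = d • c := by
    obtain ⟨d, a, hda⟩ := IsLocalization.exists_integer_multiple (nonZeroDivisors V) c
    exact ⟨d, nonZeroDivisors.ne_zero d.2, a, hda⟩
  refine ⟨d * N, mul_ne_zero hd hN, ⟨s, hs⟩ * (a • ⟨N • E.ι R, hNR⟩), Subtype.ext ?_⟩
  change (d * N) • b = u * (s * (a • (N • E.ι R)))
  have hb' : b = s * (E.ι f * E.ι R) := by
    rw [← map_mul, ← hPQ, mul_left_comm, ← mul_assoc, hPs, one_mul]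
  rw [hb', hfu]
  simp only [Algebra.smul_def, map_mul, IsScalarTower.algebraMap_apply V K L, hda]
  ring

end ValuedLine

theorem Derivation.exists_extend_of_isLocalization {R S T : Type*} [CommRing R] [CommRing S]
    [CommRing T] [Algebra R S] [Algebra R T] [Algebra S T] [IsScalarTower R S T] (M : Submonoid S)
    [IsLocalization M T] (D : Derivation R S S) :
    ∃ D' : Derivation R T T, ∀ s, D' (algebraMap S T s) = algebraMap S T (D s) := by
  have := Algebra.FormallyEtale.of_isLocalization (Rₘ := T) M
  let l : Ω[S⁄R] →ₗ[S] T := Algebra.linearMap S T ∘ₗ D.liftKaehlerDifferential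
  refine ⟨(l.liftBaseChange T ∘ₗ
    (KaehlerDifferential.tensorKaehlerEquivOfFormallyEtale R S T).symm.toLinearMap).compDer
      (KaehlerDifferential.D R T), fun s ↦ ?_⟩
  change l.liftBaseChange T ((KaehlerDifferential.tensorKaehlerEquivOfFormallyEtale R S T).symm
    (KaehlerDifferential.D R T (algebraMap S T s))) = _
  rw [KaehlerDifferential.tensorKaehlerEquivOfFormallyEtale_symm_D_algebraMap,
    LinearMap.liftBaseChange_tmul, one_smul]
  simp [l]

/-- A local extension of valuation rings inducing an isomorphism of value groups, where moreover
every positive integer is a unit of `V`. -/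
structure HasSameValueGroup (V V' : Type*) [CommRing V] [CommRing V'] [Algebra V V'] : Prop where
  injective : Function.Injective (algebraMap V V')
  isUnit_of_isUnit_algebraMap : ∀ a : V, IsUnit (algebraMap V V' a) → IsUnit a
  exists_associated : ∀ x : V', x ≠ 0 → ∃ a b : V, a ≠ 0 ∧ b ≠ 0 ∧
    Associated (algebraMap V V' a) (x * algebraMap V V' b)
  isUnit_natCast : ∀ n : ℕ, n ≠ 0 → IsUnit (n : V)

theorem HasSameValueGroup.exists_valuedLine {V V' : Type*} [CommRing V] [IsDomain V]
    [ValuationRing V] [CommRing V'] [IsDomain V'] [ValuationRing V'] [Algebra V V']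
    (h : HasSameValueGroup V V') {K K' : Type*} [Field K] [Algebra V K] [IsFractionRing V K]
    [Field K'] [Algebra V' K'] [IsFractionRing V' K'] [Algebra V K'] [IsScalarTower V V' K']
    [Algebra K K'] [IsScalarTower V K K'] (y : V')
    (L : Type*) [CommRing L] [Algebra K[X] L] [Algebra K L] [IsScalarTower K K[X] L]
    [Algebra V L] [IsScalarTower V K L]
    [(RingHom.ker (aeval (R := K) (algebraMap V' K' y))).IsPrime]
    [IsLocalization.AtPrime L (RingHom.ker (aeval (R := K) (algebraMap V' K' y)))] :
    ∃ (E : ValuedLine V K L (ValuationRing.ValueGroup V' K')) (φ : L →ₐ[V] K'),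
      (∀ x, E.w x = ValuationRing.valuation V' K' (φ x)) ∧
      ∀ P, φ (E.ι P) = aeval (algebraMap V' K' y) P := by
  set 𝔭 := RingHom.ker (aeval (R := K) (algebraMap V' K' y)) with h𝔭
  set v := ValuationRing.valuation V' K' with hv
  have hmem : ∀ P : K[X], P ∈ 𝔭.primeCompl ↔ aeval (algebraMap V' K' y) P ≠ 0 := fun P ↦ Iff.rfl
  have hv1 : ∀ x : K', v x ≤ 1 ↔ ∃ a : V', algebraMap V' K' a = x := fun x ↦
    ValuationRing.mem_integer_iff V' K' x
  let φ : L →ₐ[K] K' := IsLocalization.liftAlgHom (M := 𝔭.primeCompl)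
    (f := aeval (algebraMap V' K' y)) fun P ↦ isUnit_iff_ne_zero.mpr ((hmem P).mp P.2)
  have hφ : ∀ P, φ (algebraMap K[X] L P) = aeval (algebraMap V' K' y) P := fun P ↦
    IsLocalization.lift_eq _ P
  obtain ⟨δ, hδ⟩ := Derivation.exists_extend_of_isLocalization (T := L) 𝔭.primeCompl
    (derivative' : Derivation K K[X] K[X])
  have hval : ∀ x : V', x ≠ 0 → ∃ c : K, v (algebraMap K K' c) = v (algebraMap V' K' x) := by
    intro x hx
    obtain ⟨a, b, ha, hb, ε, hε⟩ := h.exists_associated x hx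
    have hunit : v (algebraMap V' K' ε) = 1 := by
      refine le_antisymm ((hv1 _).mpr ⟨_, rfl⟩) ?_
      have h1 : v (algebraMap V' K' ε) * v (algebraMap V' K' ↑ε⁻¹) = 1 := by
        rw [← map_mul, ← map_mul, Units.mul_inv, map_one, map_one]
      rw [← h1]
      exact mul_le_of_le_one_right' ((hv1 _).mpr ⟨_, rfl⟩)
    have hmap : ∀ a : V, algebraMap K K' (algebraMap V K a) = algebraMap V' K' (algebraMap V V' a) :=
      fun a ↦ by rw [← IsScalarTower.algebraMap_apply, ← IsScalarTower.algebraMap_apply]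
    have hb' : v (algebraMap K K' (algebraMap V K b)) ≠ 0 := by
      rw [Valuation.ne_zero_iff]
      simpa [FaithfulSMul.algebraMap_eq_zero_iff] using hb
    refine ⟨algebraMap V K a / algebraMap V K b, ?_⟩
    rw [map_div₀, map_div₀, div_eq_iff hb', hmap, hmap, ← map_mul, ← map_mul, ← hε, map_mul,
      map_mul, hunit, mul_one]
  refine ⟨⟨IsScalarTower.toAlgHom K K[X] L, δ, v.comap φ.toRingHom, ?_, fun P ↦ hδ P, ?_, fun a ↦ ?_,
    fun c hc ↦ ?_, fun P hP ↦ ?_, fun P hP ↦ ?_, fun n hn ↦ ?_⟩, φ.restrictScalars V,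
    fun x ↦ rfl, hφ⟩
  · refine IsLocalization.injective L (M := 𝔭.primeCompl) fun P hP ↦ ?_
    rw [mem_nonZeroDivisors_iff_ne_zero]
    rintro rfl
    exact (hmem 0).mp hP (map_zero _)
  · change v (φ (algebraMap K[X] L X)) ≤ 1
    rw [hφ, aeval_X, hv1]
    exact ⟨y, rfl⟩
  · change v (φ (algebraMap V L a)) ≤ 1
    rw [IsScalarTower.algebraMap_apply V K L, AlgHom.commutes, ← IsScalarTower.algebraMap_apply,
      IsScalarTower.algebraMap_apply V V' K', hv1]
    exact ⟨_, rfl⟩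
  · change v (φ (algebraMap K L c)) ≤ 1 at hc
    rw [AlgHom.commutes, hv1] at hc
    obtain ⟨a', ha'⟩ := hc
    rcases ValuationRing.isInteger_or_isInteger V c with ⟨a, ha⟩ | ⟨d, hd⟩
    · exact ⟨a, ha⟩
    · by_cases hc0 : c = 0
      · exact ⟨0, by rw [map_zero, hc0]⟩
      have hu : IsUnit (algebraMap V V' d) := by
        refine IsUnit.of_mul_eq_one a' (IsFractionRing.injective V' K' ?_)
        rw [map_mul, map_one, ha', ← IsScalarTower.algebraMap_apply,
          IsScalarTower.algebraMap_apply V K K', hd, ← map_mul, inv_mul_cancel₀ hc0, map_one]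
      obtain ⟨ε, hε⟩ := (h.isUnit_of_isUnit_algebraMap d hu).exists_right_inv
      refine ⟨ε, ?_⟩
      have := congrArg (algebraMap V K) hε
      rw [map_mul, hd, map_one] at this
      rw [← mul_inv_cancel_left₀ hc0 (algebraMap V K ε), this, mul_one]
  · change v (φ (algebraMap K[X] L P)) ≠ 0 at hP
    change ∃ c : K, v (φ (algebraMap K L c)) = v (φ (algebraMap K[X] L P))
    simp only [AlgHom.commutes]
    rw [Valuation.ne_zero_iff] at hP
    generalize φ (algebraMap K[X] L P) = x at hP
    obtain ⟨a, b, hb, rfl⟩ := IsFractionRing.div_surjective (A := V') x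
    have ha : a ≠ 0 := by
      rintro rfl
      simp at hP
    obtain ⟨c, hc⟩ := hval a ha
    obtain ⟨d, hd⟩ := hval b (nonZeroDivisors.ne_zero hb)
    exact ⟨c / d, by rw [map_div₀, map_div₀, hc, hd, map_div₀]⟩
  · change v (φ (algebraMap K[X] L P)) ≠ 0 at hP
    rw [hφ, Valuation.ne_zero_iff] at hP
    exact IsLocalization.map_units L (⟨P, hP⟩ : 𝔭.primeCompl)
  · change v (φ n) = 1
    obtain ⟨t, ht⟩ := (h.isUnit_natCast n hn).exists_right_inv
    have h1 := congrArg (fun z ↦ v (algebraMap V K' z)) ht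
    simp only [map_mul, map_one, map_natCast] at h1
    rw [map_natCast]
    refine le_antisymm ((hv1 _).mpr ⟨n, map_natCast _ _⟩) ?_
    rw [← h1]
    refine mul_le_of_le_one_right' ((hv1 _).mpr ⟨algebraMap V V' t, ?_⟩)
    rw [← IsScalarTower.algebraMap_apply]

theorem HasSameValueGroup.exists_smooth_of_mul_aeval_eq {V V' : Type*} [CommRing V] [IsDomain V]
    [ValuationRing V] [CommRing V'] [IsDomain V'] [ValuationRing V'] [Algebra V V']
    (h : HasSameValueGroup V V') (y : V') {S : Set V'} (hS : S.Finite)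
    (hgen : ∀ x ∈ S, ∃ p q : V[X], aeval y q ≠ 0 ∧ aeval y q * x = aeval y p) :
    ∃ C : Subalgebra V V', Algebra.Smooth V C ∧ S ⊆ C := by
  classical
  let K := FractionRing V
  let K' := FractionRing V'
  have : FaithfulSMul V K' := (faithfulSMul_iff_algebraMap_injective V K').mpr <| by
    rw [IsScalarTower.algebraMap_eq V V' K']
    exact (IsFractionRing.injective V' K').comp h.injective
  let _ : Algebra K K' := FractionRing.liftAlgebra V K'
  have : IsScalarTower V K K' := FractionRing.isScalarTower_liftAlgebra V K'
  have hprime : (RingHom.ker (aeval (R := K) (algebraMap V' K' y))).IsPrime := RingHom.ker_isPrime _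
  let L := Localization.AtPrime (RingHom.ker (aeval (R := K) (algebraMap V' K' y)))
  obtain ⟨E, φ, hw, hφ⟩ := h.exists_valuedLine (K := K) (K' := K') y L
  have hφ0 : ∀ x, φ x = 0 ↔ E.w x = 0 := fun x ↦ by rw [hw, Valuation.zero_iff]
  have hw0 : ∀ Q, E.w (E.ι Q) = 0 ↔ aeval (algebraMap V' K' y) Q = 0 := fun Q ↦ by
    rw [← hφ0, hφ]
  have hgenK : ∀ x ∈ S, ∃ p q : K[X], aeval (algebraMap V' K' y) q ≠ 0 ∧
      aeval (algebraMap V' K' y) q * algebraMap V' K' x = aeval (algebraMap V' K' y) p := by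
    intro x hx
    obtain ⟨p, q, hq, hpq⟩ := hgen x hx
    refine ⟨p.map (algebraMap V K), q.map (algebraMap V K), ?_, ?_⟩
    · rwa [aeval_map_algebraMap, aeval_algebraMap_apply, Ne,
        FaithfulSMul.algebraMap_eq_zero_iff]
    · rw [aeval_map_algebraMap, aeval_algebraMap_apply, aeval_map_algebraMap,
        aeval_algebraMap_apply, ← hpq, map_mul]
  suffices hB : ∃ B : Subalgebra V L, (∀ b ∈ B, E.w b ≤ 1) ∧
      Algebra.Smooth V (φ.comp B.val).range ∧ ∀ x ∈ S, ∃ b ∈ B, φ b = algebraMap V' K' x by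
    obtain ⟨B, hB1, hB, hBS⟩ := hB
    let j := IsScalarTower.toAlgHom V V' K'
    have hj : Function.Injective j := IsFractionRing.injective V' K'
    have hrange : ((φ.comp B.val).range.comap j).map j = (φ.comp B.val).range := by
      refine le_antisymm (Subalgebra.map_le.mpr le_rfl) ?_
      rintro _ ⟨b, rfl⟩
      have hb := hB1 b b.2
      rw [hw] at hb
      obtain ⟨a, ha⟩ := (ValuationRing.mem_integer_iff V' K' _).mp hb
      exact ⟨a, ⟨b, ha.symm⟩, ha⟩
    rw [← hrange] at hB
    refine ⟨(φ.comp B.val).range.comap j,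
      .of_equiv (Subalgebra.equivMapOfInjective _ j hj).symm, fun x hx ↦ ?_⟩
    obtain ⟨b, hb, hbx⟩ := hBS x hx
    exact ⟨⟨b, hb⟩, hbx⟩
  have key : ∀ p q : V' → K[X], (∀ x ∈ S, aeval (algebraMap V' K' y) (q x) ≠ 0) →
      (∀ x ∈ S, aeval (algebraMap V' K' y) (q x) * algebraMap V' K' x =
        aeval (algebraMap V' K' y) (p x)) →
      (∀ s ∈ (fun x ↦ (p x, q x)) '' S, s.2 ≠ 0) ∧
      (∀ s ∈ (fun x ↦ (p x, q x)) '' S, E.w (E.ι s.1) ≤ E.w (E.ι s.2)) ∧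
      ∀ B : Subalgebra V L, (∀ s ∈ (fun x ↦ (p x, q x)) '' S, ∃ b ∈ B, E.ι s.2 * b = E.ι s.1) →
        ∀ x ∈ S, ∃ b ∈ B, φ b = algebraMap V' K' x := by
    intro p q hq hpq
    simp only [Set.forall_mem_image]
    refine ⟨fun x hx h0 ↦ hq x hx (by rw [h0, map_zero]), fun x hx ↦ ?_, fun B hB x hx ↦ ?_⟩
    · rw [hw, hw, hφ, hφ, ← hpq x hx, map_mul]
      exact mul_le_of_le_one_right' ((ValuationRing.mem_integer_iff V' K' _).mpr ⟨x, rfl⟩)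
    · obtain ⟨b, hb, hbx⟩ := hB hx
      refine ⟨b, hb, mul_left_cancel₀ (hq x hx) ?_⟩
      rw [hpq x hx, ← hφ, ← hφ, ← map_mul, hbx]
  by_cases htr : IsAlgebraic K (algebraMap V' K' y)
  · have hmonic := minpoly.monic htr.isIntegral
    have hgen' : ∀ x, ∃ p q : K[X], x ∈ S → aeval (algebraMap V' K' y) q ≠ 0 ∧
        aeval (algebraMap V' K' y) q * algebraMap V' K' x = aeval (algebraMap V' K' y) p ∧
        p.natDegree < (minpoly K (algebraMap V' K' y)).natDegree ∧
        q.natDegree < (minpoly K (algebraMap V' K' y)).natDegree := by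
      intro x
      by_cases hx : x ∈ S
      · obtain ⟨p, q, hq, hpq⟩ := hgenK x hx
        have hmod : ∀ r : K[X], aeval (algebraMap V' K' y) (r %ₘ minpoly K (algebraMap V' K' y)) =
            aeval (algebraMap V' K' y) r := fun r ↦
          aeval_modByMonic_eq_self_of_root (minpoly.aeval _ _)
        have hone := minpoly.ne_one K (algebraMap V' K' y)
        refine ⟨p %ₘ minpoly K (algebraMap V' K' y), q %ₘ minpoly K (algebraMap V' K' y),
          fun _ ↦ ⟨by rwa [hmod], by rwa [hmod, hmod], natDegree_modByMonic_lt _ hmonic hone,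
            natDegree_modByMonic_lt _ hmonic hone⟩⟩
      · exact ⟨0, 0, fun h ↦ absurd h hx⟩
    choose p q hpq using hgen'
    obtain ⟨h1, h2, h3⟩ := key p q (fun x hx ↦ (hpq x hx).1) (fun x hx ↦ (hpq x hx).2.1)
    obtain ⟨B, hB1, hB2, hB3⟩ := E.exists_smooth_of_isAlgebraic φ hφ0 hmonic.ne_zero
      (fun Q ↦ by rw [hw0, minpoly.dvd_iff]) (hS.image _) h1
      (Set.forall_mem_image.mpr fun x hx ↦ (hpq x hx).2.2) h2
    exact ⟨B, hB1, hB2, h3 B hB3⟩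
  · have hgen' : ∀ x, ∃ p q : K[X], x ∈ S → aeval (algebraMap V' K' y) q ≠ 0 ∧
        aeval (algebraMap V' K' y) q * algebraMap V' K' x = aeval (algebraMap V' K' y) p := by
      intro x
      by_cases hx : x ∈ S
      · obtain ⟨p, q, hpq⟩ := hgenK x hx
        exact ⟨p, q, fun _ ↦ hpq⟩
      · exact ⟨0, 0, fun h ↦ absurd h hx⟩
    choose p q hpq using hgen'
    obtain ⟨h1, h2, h3⟩ := key p q (fun x hx ↦ (hpq x hx).1) (fun x hx ↦ (hpq x hx).2)
    obtain ⟨B, hB1, hB2, hB3⟩ := E.exists_smooth_of_transcendental φ hφ0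
      (fun Q hQ h0 ↦ htr ⟨Q, hQ, (hw0 Q).mp h0⟩) (hS.image _) h1 h2
    exact ⟨B, hB1, hB2, h3 B hB3⟩

open TensorProduct in
theorem Subalgebra.exists_smooth_trans {V W V' : Type u} [CommRing V] [CommRing W] [CommRing V']
    [Algebra V W] [Algebra W V'] [Algebra V V'] [IsScalarTower V W V']
    (hW : ∀ T : Set W, T.Finite → ∃ C : Subalgebra V W, Algebra.Smooth V C ∧ T ⊆ C)
    (B : Subalgebra W V') [Algebra.Smooth W B] {S : Set V'} (hS : S.Finite) (hSB : S ⊆ B) :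
    ∃ D : Subalgebra V V', Algebra.Smooth V D ∧ S ⊆ D := by
  classical
  obtain ⟨A₀, B₀, _, _, ⟨G, hG⟩, _, ⟨e⟩⟩ := Algebra.Smooth.exists_subalgebra_fg V W B
  choose F hF using fun t : W ⊗[A₀] B₀ ↦ TensorProduct.exists_finset t
  have : Finite S := hS
  obtain ⟨C, _, hTC⟩ := hW (G ∪ ⋃ s : S, Prod.fst '' (F (e ⟨s, hSB s.2⟩) : Set (W × B₀)))
    (G.finite_toSet.union (Set.finite_iUnion fun s ↦ (Finset.finite_toSet _).image _))
  rw [Set.union_subset_iff, Set.iUnion_subset_iff] at hTC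
  have hAC : A₀ ≤ C := hG ▸ Algebra.adjoin_le hTC.1
  let _ : Algebra A₀ C := (Subalgebra.inclusion hAC).toAlgebra
  have : IsScalarTower A₀ C W := .of_algebraMap_eq fun _ ↦ rfl
  have : IsScalarTower V A₀ C := .of_algebraMap_eq fun _ ↦ rfl
  let θ : C ⊗[A₀] B₀ →ₐ[C] W ⊗[A₀] B₀ :=
    Algebra.TensorProduct.map (Algebra.ofId C W) (AlgHom.id A₀ B₀)
  have hθ : Function.Injective θ :=
    Module.Flat.rTensor_preserves_injective_linearMap (M := B₀)
      (IsScalarTower.toAlgHom A₀ C W).toLinearMap Subtype.val_injective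
  let ψ : C ⊗[A₀] B₀ →ₐ[V] V' := (B.val.restrictScalars V).comp
    ((e.symm.toAlgHom.restrictScalars V).comp (θ.restrictScalars V))
  have hψ : Function.Injective ψ := Subtype.val_injective.comp (e.symm.injective.comp hθ)
  have : Algebra.Smooth V (C ⊗[A₀] B₀) := .comp V C _
  refine ⟨ψ.range, .of_equiv (AlgEquiv.ofInjective ψ hψ), fun s hs ↦ ?_⟩
  have hmem : e ⟨s, hSB hs⟩ ∈ θ.range := by
    rw [hF (e ⟨s, hSB hs⟩)]
    exact sum_mem fun i hi ↦ ⟨⟨i.1, hTC.2 ⟨s, hs⟩ ⟨i, hi, rfl⟩⟩ ⊗ₜ i.2, by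
      simp [θ, Algebra.ofId_apply]⟩
  obtain ⟨t, ht⟩ := hmem
  refine ⟨t, ?_⟩
  change B.val (e.symm (θ t)) = s
  rw [show θ t = _ from ht, e.symm_apply_apply]
  rfl

/-- The `V`-subalgebra of the domain `V'` of elements lying in the field generated by `y`. -/
def Subalgebra.fractionsIn (V : Type*) {V' : Type*} [CommRing V] [CommRing V'] [IsDomain V']
    [Algebra V V'] (y : V') : Subalgebra V V' where
  carrier := {x | ∃ p q : V[X], aeval y q ≠ 0 ∧ aeval y q * x = aeval y p}
  mul_mem' := by
    rintro a b ⟨p, q, hq, h⟩ ⟨p', q', hq', h'⟩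
    refine ⟨p * p', q * q', by simp [hq, hq'], ?_⟩
    rw [map_mul, map_mul, ← h, ← h']
    ring
  add_mem' := by
    rintro a b ⟨p, q, hq, h⟩ ⟨p', q', hq', h'⟩
    refine ⟨p * q' + q * p', q * q', by simp [hq, hq'], ?_⟩
    rw [map_mul, map_add, map_mul, map_mul, ← h, ← h']
    ring
  algebraMap_mem' a := ⟨C a, 1, by simp, by simp⟩

namespace Subalgebra

variable {V V' : Type*} [CommRing V] [CommRing V'] [IsDomain V'] [Algebra V V'] {y : V'}

theorem self_mem_fractionsIn : y ∈ fractionsIn V y :=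
  ⟨X, 1, by simp, by simp⟩

theorem mem_fractionsIn_of_mul_eq {a b c : V'} (ha : a ∈ fractionsIn V y)
    (hb : b ∈ fractionsIn V y) (ha0 : a ≠ 0) (h : a * c = b) : c ∈ fractionsIn V y := by
  obtain ⟨p, q, hq, hpq⟩ := ha
  obtain ⟨p', q', hq', hpq'⟩ := hb
  refine ⟨q * p', q' * p, ?_, ?_⟩
  · rw [map_mul, ← hpq]
    exact mul_ne_zero hq' (mul_ne_zero hq ha0)
  · rw [map_mul, map_mul, ← hpq, ← hpq', ← h]
    ring

theorem valuationRing_fractionsIn [ValuationRing V'] : ValuationRing (fractionsIn V y) where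
  cond' := by
    have key : ∀ a b : fractionsIn V y, ∀ c : V', (a : V') * c = b → ∃ c, a * c = b := by
      intro a b c h
      by_cases ha : (a : V') = 0
      · exact ⟨0, Subtype.ext (by simp [← h, ha])⟩
      · exact ⟨⟨c, mem_fractionsIn_of_mul_eq a.2 b.2 ha h⟩, Subtype.ext h⟩
    intro a b
    obtain ⟨c, h | h⟩ := ValuationRing.cond (a : V') b
    · exact (key a b c h).imp fun _ ↦ .inl
    · exact (key b a c h).imp fun _ ↦ .inr

theorem isUnit_of_isUnit_coe_fractionsIn (a : fractionsIn V y) (ha : IsUnit (a : V')) :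
    IsUnit a := by
  obtain ⟨c, hc⟩ := ha.exists_right_inv
  exact .of_mul_eq_one ⟨c, mem_fractionsIn_of_mul_eq a.2 (one_mem _) ha.ne_zero hc⟩
    (Subtype.ext hc)

end Subalgebra

namespace HasSameValueGroup

variable {V V' : Type*} [CommRing V] [CommRing V'] [IsDomain V'] [Algebra V V']

open Subalgebra

theorem fractionsIn_left (h : HasSameValueGroup V V') (y : V') :
    HasSameValueGroup V (fractionsIn V y) where
  injective := .of_comp (f := (fractionsIn V y).val) h.injective
  isUnit_of_isUnit_algebraMap a ha :=
    h.isUnit_of_isUnit_algebraMap a (ha.map (fractionsIn V y).val)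
  exists_associated x hx := by
    obtain ⟨a, b, ha, hb, ε, hε⟩ := h.exists_associated x (by simpa using hx)
    have hεmem : (ε : V') ∈ fractionsIn V y :=
      mem_fractionsIn_of_mul_eq (algebraMap_mem _ a) (mul_mem x.2 (algebraMap_mem _ b))
        (by rwa [Ne, map_eq_zero_iff _ h.injective]) hε
    obtain ⟨η, hη⟩ := isUnit_of_isUnit_coe_fractionsIn ⟨(ε : V'), hεmem⟩ ε.isUnit
    exact ⟨a, b, ha, hb, η, by rw [hη]; exact Subtype.ext hε⟩
  isUnit_natCast := h.isUnit_natCast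

theorem fractionsIn_right (h : HasSameValueGroup V V') (y : V') :
    HasSameValueGroup (fractionsIn V y) V' where
  injective := Subtype.val_injective
  isUnit_of_isUnit_algebraMap := isUnit_of_isUnit_coe_fractionsIn
  exists_associated x hx := by
    obtain ⟨a, b, ha, hb, hab⟩ := h.exists_associated x hx
    have hinj := (h.fractionsIn_left y).injective
    exact ⟨algebraMap V _ a, algebraMap V _ b, by rwa [Ne, map_eq_zero_iff _ hinj],
      by rwa [Ne, map_eq_zero_iff _ hinj], hab⟩
  isUnit_natCast n hn := by
    simpa using (h.isUnit_natCast n hn).map (algebraMap V (fractionsIn V y))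

theorem exists_smooth {V' : Type u} [CommRing V'] [IsDomain V'] [ValuationRing V'] {S : Set V'}
    (hS : S.Finite) : ∀ (V : Type u) [CommRing V] [IsDomain V] [ValuationRing V] [Algebra V V'],
      HasSameValueGroup V V' → ∃ C : Subalgebra V V', Algebra.Smooth V C ∧ S ⊆ C := by
  induction S, hS using Set.Finite.induction_on with
  | empty =>
    intro V _ _ _ _ h
    exact ⟨⊥, .of_equiv (Algebra.botEquivOfInjective h.injective).symm, Set.empty_subset _⟩
  | @insert y S _ hS ih =>
    intro V _ _ _ _ h
    have : ValuationRing (fractionsIn V y) := valuationRing_fractionsIn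
    obtain ⟨B, _, hSB⟩ := ih (fractionsIn V y) (h.fractionsIn_right y)
    refine exists_smooth_trans (W := fractionsIn V y) (fun T hT ↦ ?_) B (hS.insert y)
      (Set.insert_subset (B.algebraMap_mem ⟨y, self_mem_fractionsIn⟩) hSB)
    refine (h.fractionsIn_left y).exists_smooth_of_mul_aeval_eq ⟨y, self_mem_fractionsIn⟩ hT ?_
    rintro ⟨x, p, q, hq, hpq⟩ -
    have hcoe : ∀ r : V[X], (aeval (⟨y, self_mem_fractionsIn⟩ : fractionsIn V y) r : V') =
        aeval y r := fun r ↦ (aeval_algHom_apply (fractionsIn V y).val _ r).symm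
    refine ⟨p, q, fun h0 ↦ hq ?_, Subtype.ext ?_⟩
    · rw [← hcoe, h0, ZeroMemClass.coe_zero]
    · rw [MulMemClass.coe_mul, hcoe, hcoe, hpq]

end HasSameValueGroup

theorem IsImmediateExtension.hasSameValueGroup {V V' : Type*} [CommRing V] [IsLocalRing V]
    [CommRing V'] [IsLocalRing V'] [Algebra V V'] [Algebra ℚ V]
    (h : IsImmediateExtension V V') : HasSameValueGroup V V' where
  injective := h.1
  isUnit_of_isUnit_algebraMap a ha := by
    by_contra hna
    exact (h.2.1 a).mpr hna ha
  exists_associated := h.2.2.2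
  isUnit_natCast n hn := by
    simpa using (isUnit_iff_ne_zero.mpr (Nat.cast_ne_zero.mpr hn) : IsUnit (n : ℚ)).map
      (algebraMap ℚ V)

end

/-- If `V ⊆ V'` is an immediate extension of valuation rings containing `ℚ`, then `V'`
is a filtered direct colimit of smooth `V`-algebras: every `V`-algebra homomorphism
`u : A → V'` from a finitely presented `V`-algebra `A` factors through a smooth
`V`-algebra `B`. -/
theorem immediate_extension_filtered_colimit_smooth
    (V V' : Type u) [CommRing V] [IsDomain V] [ValuationRing V]
    [CommRing V'] [IsDomain V'] [ValuationRing V'] [Algebra V V'] [Algebra ℚ V]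
    (himm : IsImmediateExtension V V')
    (A : Type u) [CommRing A] [Algebra V A] (hA : Algebra.FinitePresentation V A)
    (u : A →ₐ[V] V') :
    ∃ (B : Type u) (_ : CommRing B) (_ : Algebra V B), Algebra.Smooth V B ∧
      ∃ (f : A →ₐ[V] B) (g : B →ₐ[V] V'), g.comp f = u := by
  have : Algebra.FiniteType V A := inferInstance
  obtain ⟨G, hG⟩ := this.out
  obtain ⟨C, hC, hGC⟩ := HasSameValueGroup.exists_smooth ((G : Set A).toFinite.image u) V
    himm.hasSameValueGroup
  have hu : ∀ a, u a ∈ C := fun a ↦ by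
    have ha : a ∈ Algebra.adjoin V (G : Set A) := hG ▸ Algebra.mem_top
    exact Algebra.adjoin_le (S := C.comap u) (fun x hx ↦ hGC ⟨x, hx, rfl⟩) ha
  exact ⟨C, inferInstance, inferInstance, hC, u.codRestrict C hu, C.val, rfl⟩
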